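/- arXiv:2401.14771 — 3 statements merged into one kernel-verified Lean document; each statement's English description precedes it below -/
import Mathlib

section
/- Let α ∈ (1,2), T > 0, M ∈ ℝ, and let g : [0,T] × ℝ → ℝ be continuous and Lipschitz continuous in its second variable. Let y : [0,T] → ℝ be continuous and satisfy y(t) = y₀ + y₁ t + (1/Γ(α)) ∫₀ᵗ (t−s)^{α−1} (M y(s) + g(s, y(s))) ds for all t ∈ [0,T]. Then for all t ∈ [0,T], y(t) = y₀ E_{α,1}(M t^α) + y₁ t E_{α,2}(M t^α) + ∫₀ᵗ (t−τ)^{α−1} E_{α,α}(M (t−τ)^α) g(τ, y(τ)) dτ. -/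
/-- The two-parameter Mittag-Leffler function `E_{α,β}(z) = ∑ₖ zᵏ / Γ(αk + β)`. -/
noncomputable def mlE (α β z : ℝ) : ℝ := ∑' k : ℕ, z ^ k / Real.Gamma (α * k + β)

open MeasureTheory Set in
theorem beta_real {a b t : ℝ} (ha : 0 < a) (hb : 0 < b) (ht : 0 < t) :
    ∫ x in (0 : ℝ)..t, x ^ (a - 1) * (t - x) ^ (b - 1)
      = t ^ (a + b - 1) * (Real.Gamma a * Real.Gamma b / Real.Gamma (a + b)) := by
  have h := Complex.betaIntegral_scaled (a : ℂ) (b : ℂ) ht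
  have h2 := Complex.Gamma_mul_Gamma_eq_betaIntegral (s := (a : ℂ)) (t := (b : ℂ))
    (by simpa using ha) (by simpa using hb)
  have hG : Real.Gamma (a + b) ≠ 0 := (Real.Gamma_pos_of_pos (by linarith)).ne'
  have h3 : Complex.betaIntegral a b
      = ((Real.Gamma a * Real.Gamma b / Real.Gamma (a + b) : ℝ) : ℂ) := by
    rw [← Complex.ofReal_add, Complex.Gamma_ofReal, Complex.Gamma_ofReal,
      Complex.Gamma_ofReal] at h2
    push_cast
    rw [h2, mul_div_cancel_left₀ _ (Complex.ofReal_ne_zero.2 hG)]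
  rw [h3] at h
  have h4 : ∫ x in (0 : ℝ)..t, (x : ℂ) ^ ((a : ℂ) - 1) * ((t : ℂ) - x) ^ ((b : ℂ) - 1)
      = ∫ x in (0 : ℝ)..t, ((x ^ (a - 1) * (t - x) ^ (b - 1) : ℝ) : ℂ) := by
    apply intervalIntegral.integral_congr
    intro x hx
    rw [uIcc_of_le ht.le] at hx
    simp only
    rw [Complex.ofReal_mul, Complex.ofReal_cpow hx.1, Complex.ofReal_cpow (by linarith [hx.2])]
    push_cast
    rfl
  rw [h4, intervalIntegral.integral_ofReal] at h
  have h5 : (t : ℂ) ^ ((a : ℂ) + b - 1) = ((t ^ (a + b - 1) : ℝ) : ℂ) := by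
    rw [Complex.ofReal_cpow ht.le]; push_cast; rfl
  rw [h5, ← Complex.ofReal_mul] at h
  exact_mod_cast h

/-- Riemann-Liouville integral. -/
noncomputable def rlJ (β : ℝ) (f : ℝ → ℝ) (t : ℝ) : ℝ :=
  (1 / Real.Gamma β) * ∫ s in (0 : ℝ)..t, (t - s) ^ (β - 1) * f s

theorem rlJ_kernel_cont {β : ℝ} (hβ : 1 ≤ β) (t : ℝ) :
    Continuous (fun s : ℝ => (t - s) ^ (β - 1)) :=
  (Real.continuous_rpow_const (by linarith)).comp (by fun_prop)

theorem rlJ_cont {β : ℝ} (hβ : 1 ≤ β) {f : ℝ → ℝ} (hf : Continuous f) :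
    Continuous (rlJ β f) := by
  unfold rlJ
  apply continuous_const.mul
  apply intervalIntegral.continuous_parametric_intervalIntegral_of_continuous
    (f := fun t s => (t - s) ^ (β - 1) * f s) (s := fun t => t)
  · apply Continuous.mul
    · exact (Real.continuous_rpow_const (by linarith)).comp (by fun_prop)
    · fun_prop
  · fun_prop

theorem rlJ_congr {β t : ℝ} (ht : 0 ≤ t) {f g : ℝ → ℝ} (h : ∀ s ∈ Set.Icc 0 t, f s = g s) :
    rlJ β f t = rlJ β g t := by
  unfold rlJ
  congr 1
  apply intervalIntegral.integral_congr
  intro s hs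
  rw [Set.uIcc_of_le ht] at hs
  simp only [h s hs]

theorem rlJ_add {β : ℝ} (hβ : 1 ≤ β) {f g : ℝ → ℝ} (hf : Continuous f) (hg : Continuous g)
    (t : ℝ) : rlJ β (fun s => f s + g s) t = rlJ β f t + rlJ β g t := by
  unfold rlJ
  have hk := rlJ_kernel_cont hβ t
  rw [← mul_add, ← intervalIntegral.integral_add]
  · simp only [mul_add]
  · exact (hk.mul hf).intervalIntegrable _ _
  · exact (hk.mul hg).intervalIntegrable _ _

theorem rlJ_smul {β : ℝ} (c : ℝ) (f : ℝ → ℝ) (t : ℝ) :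
    rlJ β (fun s => c * f s) t = c * rlJ β f t := by
  unfold rlJ
  rw [mul_left_comm, ← intervalIntegral.integral_const_mul c]
  congr 1
  apply intervalIntegral.integral_congr
  intro s _
  simp only
  ring

theorem rlJ_pow {β γ t : ℝ} (hβ : 1 ≤ β) (hγ : 1 ≤ γ) (ht : 0 ≤ t) :
    rlJ β (fun s => s ^ (γ - 1)) t = Real.Gamma γ * t ^ (β + γ - 1) / Real.Gamma (β + γ) := by
  rcases ht.eq_or_lt with rfl | ht
  · simp [rlJ, Real.zero_rpow (show β + γ - 1 ≠ 0 by linarith)]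
  unfold rlJ
  have h := beta_real (a := γ) (b := β) (t := t) (by linarith) (by linarith) ht
  simp only [mul_comm (_ ^ (γ - 1))] at h
  rw [h, add_comm γ β]
  have := (Real.Gamma_pos_of_pos (show 0 < β by linarith)).ne'
  field_simp

theorem rlJ_one {β t : ℝ} (hβ : 1 ≤ β) (ht : 0 ≤ t) :
    rlJ β (fun _ => 1) t = t ^ β / Real.Gamma (β + 1) := by
  have := rlJ_pow hβ (le_refl (1 : ℝ)) ht
  simpa using this

theorem rlJ_id {β t : ℝ} (hβ : 1 ≤ β) (ht : 0 ≤ t) :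
    rlJ β (fun s => s) t = t ^ (β + 1) / Real.Gamma (β + 2) := by
  have := rlJ_pow hβ (show (1 : ℝ) ≤ 2 by norm_num) ht
  rw [show β + 2 - 1 = β + 1 by ring, show (2 : ℝ) - 1 = 1 by norm_num, Real.Gamma_two,
    one_mul] at this
  simpa using this

open MeasureTheory Set in
theorem rlJ_comp {α β t : ℝ} (hα : 1 < α) (hβ : 1 ≤ β) (ht : 0 ≤ t) {f : ℝ → ℝ}
    (hf : Continuous f) : rlJ β (rlJ α f) t = rlJ (β + α) f t := by
  -- truncated kernel
  have hz : (0 : ℝ) ^ (α - 1) = 0 := Real.zero_rpow (by linarith)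
  have hkc : Continuous (fun p : ℝ × ℝ => (max (p.1 - p.2) 0) ^ (α - 1)) :=
    (Real.continuous_rpow_const (by linarith)).comp (by fun_prop)
  have h1 : ∀ s ∈ Icc (0 : ℝ) t, rlJ α f s
      = (1 / Real.Gamma α) * ∫ r in (0 : ℝ)..t, (max (s - r) 0) ^ (α - 1) * f r := by
    intro s hs
    unfold rlJ
    congr 1
    have hc : Continuous (fun r : ℝ => (max (s - r) 0) ^ (α - 1) * f r) :=
      (hkc.comp (by fun_prop : Continuous (fun r : ℝ => (s, r)))).mul hf
    rw [← intervalIntegral.integral_add_adjacent_intervals (hc.intervalIntegrable 0 s)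
      (hc.intervalIntegrable s t)]
    have e2 : ∫ r in s..t, (max (s - r) 0) ^ (α - 1) * f r = 0 := by
      rw [intervalIntegral.integral_congr (g := fun _ => (0 : ℝ))]
      · simp
      · intro r hr
        rw [uIcc_of_le hs.2] at hr
        simp only
        rw [max_eq_right (by linarith [hr.1]), hz, zero_mul]
    rw [e2, add_zero]
    apply intervalIntegral.integral_congr
    intro r hr
    rw [uIcc_of_le hs.1] at hr
    simp only
    rw [max_eq_left (by linarith [hr.2])]
  rw [rlJ_congr ht h1, rlJ_smul]
  unfold rlJ
  have hF : Continuous (Function.uncurry (fun s r : ℝ =>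
      (t - s) ^ (β - 1) * ((max (s - r) 0) ^ (α - 1) * f r))) := by
    apply Continuous.mul
    · exact (rlJ_kernel_cont hβ t).comp continuous_fst
    · exact hkc.mul (hf.comp continuous_snd)
  have hswap : ∫ s in (0 : ℝ)..t, (t - s) ^ (β - 1) *
        ∫ r in (0 : ℝ)..t, (max (s - r) 0) ^ (α - 1) * f r
      = ∫ r in (0 : ℝ)..t, ∫ s in (0 : ℝ)..t,
          (t - s) ^ (β - 1) * ((max (s - r) 0) ^ (α - 1) * f r) := by
    simp only [← intervalIntegral.integral_const_mul]
    simp only [intervalIntegral.integral_of_le ht]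
    apply integral_integral_swap
    rw [Measure.prod_restrict]
    have : IntegrableOn (Function.uncurry (fun s r : ℝ =>
      (t - s) ^ (β - 1) * ((max (s - r) 0) ^ (α - 1) * f r))) (Icc 0 t ×ˢ Icc 0 t)
        (volume.prod volume) :=
      hF.continuousOn.integrableOn_compact (isCompact_Icc.prod isCompact_Icc)
    exact this.mono_set (prod_mono Ioc_subset_Icc_self Ioc_subset_Icc_self)
  rw [hswap]
  have hin : ∀ r ∈ uIcc (0 : ℝ) t, ∫ s in (0 : ℝ)..t,
          (t - s) ^ (β - 1) * ((max (s - r) 0) ^ (α - 1) * f r)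
      = (Real.Gamma α * Real.Gamma β / Real.Gamma (β + α)) * ((t - r) ^ (β + α - 1) * f r) := by
    intro r hr
    rw [uIcc_of_le ht] at hr
    have hc : Continuous (fun s : ℝ => (t - s) ^ (β - 1) * ((max (s - r) 0) ^ (α - 1) * f r)) :=
      hF.comp (by fun_prop : Continuous (fun s : ℝ => (s, r)))
    rw [← intervalIntegral.integral_add_adjacent_intervals (hc.intervalIntegrable 0 r)
      (hc.intervalIntegrable r t)]
    have e1 : ∫ s in (0 : ℝ)..r, (t - s) ^ (β - 1) * ((max (s - r) 0) ^ (α - 1) * f r) = 0 := by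
      rw [intervalIntegral.integral_congr (g := fun _ => (0 : ℝ))]
      · simp
      · intro s hs
        rw [uIcc_of_le hr.1] at hs
        simp only
        rw [max_eq_right (by linarith [hs.2]), hz, zero_mul, mul_zero]
    rw [e1, zero_add]
    rcases hr.2.eq_or_lt with rfl | hrt
    · simp [Real.zero_rpow (show β + α - 1 ≠ 0 by linarith)]
    have e3 : ∫ s in r..t, (t - s) ^ (β - 1) * ((max (s - r) 0) ^ (α - 1) * f r)
        = ∫ s in r..t, (fun x => x ^ (α - 1) * ((t - r) - x) ^ (β - 1) * f r) (s - r) := by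
      apply intervalIntegral.integral_congr
      intro s hs
      rw [uIcc_of_le hr.2] at hs
      simp only
      rw [max_eq_left (by linarith [hs.1]), show t - r - (s - r) = t - s by ring]
      ring
    rw [e3, intervalIntegral.integral_comp_sub_right
      (fun x => x ^ (α - 1) * ((t - r) - x) ^ (β - 1) * f r), sub_self,
      intervalIntegral.integral_mul_const,
      beta_real (by linarith) (by linarith) (by linarith), add_comm α β]
    ring
  rw [intervalIntegral.integral_congr hin, intervalIntegral.integral_const_mul]
  have := (Real.Gamma_pos_of_pos (show 0 < β by linarith)).ne'
  have := (Real.Gamma_pos_of_pos (show 0 < α by linarith)).ne'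
  field_simp

theorem ml_summable {α β : ℝ} (hα : 1 ≤ α) (hβ : 1 ≤ β) (z : ℝ) :
    Summable (fun k : ℕ => z ^ k / Real.Gamma (α * k + β)) := by
  rw [← summable_nat_add_iff 1]
  refine Summable.of_norm_bounded
    ((summable_nat_add_iff 1).2 (Real.summable_pow_div_factorial |z|)) ?_
  intro k
  have h1 : ((k + 1 : ℕ) : ℝ) + 1 ≤ α * ((k + 1 : ℕ) : ℝ) + β := by
    have : (0 : ℝ) ≤ ((k + 1 : ℕ) : ℝ) := by positivity
    nlinarith
  have h2 : (2 : ℝ) ≤ ((k + 1 : ℕ) : ℝ) + 1 := by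
    push_cast
    have : (0 : ℝ) ≤ k := by positivity
    linarith
  have h3 : ((k + 1).factorial : ℝ) ≤ Real.Gamma (α * ((k + 1 : ℕ) : ℝ) + β) := by
    rw [← Real.Gamma_nat_eq_factorial]
    exact Real.Gamma_strictMonoOn_Ici.monotoneOn h2 (h2.trans h1) h1
  have h4 : (0 : ℝ) < ((k + 1).factorial : ℝ) := by positivity
  rw [norm_div, norm_pow, Real.norm_eq_abs, Real.norm_eq_abs, abs_of_pos (h4.trans_le h3)]
  gcongr

theorem rlJ_bound {β t C : ℝ} (hβ : 1 ≤ β) (ht : 0 ≤ t) {f : ℝ → ℝ} (hf : Continuous f)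
    (hC : ∀ s ∈ Set.Icc 0 t, |f s| ≤ C) :
    |rlJ β f t| ≤ C * (t ^ β / Real.Gamma (β + 1)) := by
  rw [← rlJ_one hβ ht, ← rlJ_smul]
  have hG := Real.Gamma_pos_of_pos (show 0 < β by linarith)
  have hk := rlJ_kernel_cont hβ t
  unfold rlJ
  rw [abs_mul, abs_of_pos (by positivity : 0 < 1 / Real.Gamma β)]
  apply mul_le_mul_of_nonneg_left _ (by positivity)
  refine (intervalIntegral.abs_integral_le_integral_abs ht).trans ?_
  apply intervalIntegral.integral_mono_on ht
  · exact ((hk.mul hf).abs).intervalIntegrable _ _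
  · exact (hk.mul (by fun_prop)).intervalIntegrable _ _
  · intro s hs
    have h0 : 0 ≤ (t - s) ^ (β - 1) := Real.rpow_nonneg (by linarith [hs.2]) _
    rw [abs_mul, abs_of_nonneg h0, mul_one]
    exact mul_le_mul_of_nonneg_left (hC s hs) h0

theorem iterate_formula {α T M y₀ y₁ : ℝ} (hα : 1 < α) {Y H : ℝ → ℝ} (hY : Continuous Y)
    (hH : Continuous H)
    (h : ∀ t ∈ Set.Icc (0 : ℝ) T, Y t = y₀ + y₁ * t + M * rlJ α Y t + rlJ α H t)
    (t : ℝ) (ht : t ∈ Set.Icc (0 : ℝ) T) (n : ℕ) :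
    Y t = (∑ k ∈ Finset.range (n + 1), (y₀ * ((M * t ^ α) ^ k / Real.Gamma (α * k + 1))
        + y₁ * t * ((M * t ^ α) ^ k / Real.Gamma (α * k + 2))
        + M ^ k * rlJ (α * k + α) H t)) + M ^ (n + 1) * rlJ (α * n + α) Y t := by
  induction n with
  | zero =>
    rw [h t ht]
    simp
    ring
  | succ n ih =>
    rw [Finset.sum_range_succ]
    set S := ∑ k ∈ Finset.range (n + 1), (y₀ * ((M * t ^ α) ^ k / Real.Gamma (α * k + 1))
        + y₁ * t * ((M * t ^ α) ^ k / Real.Gamma (α * k + 2))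
        + M ^ k * rlJ (α * k + α) H t)
    rw [ih]
    have hb : 1 ≤ α * n + α := by
      have : (0 : ℝ) ≤ n := by positivity
      nlinarith
    have hJY := rlJ_cont hα.le hY
    have hJH := rlJ_cont hα.le hH
    have e : rlJ (α * n + α) Y t = y₀ * (t ^ (α * n + α) / Real.Gamma (α * n + α + 1))
        + y₁ * (t ^ (α * n + α + 1) / Real.Gamma (α * n + α + 2))
        + M * rlJ (α * n + α + α) Y t + rlJ (α * n + α + α) H t := by
      rw [rlJ_congr ht.1 (g := fun s => y₀ * 1 + y₁ * s + M * rlJ α Y s + rlJ α H s)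
        (fun s hs => by rw [h s ⟨hs.1, hs.2.trans ht.2⟩, mul_one])]
      rw [rlJ_add hb (by fun_prop) hJH, rlJ_add hb (by fun_prop) (by fun_prop),
        rlJ_add hb (by fun_prop) (by fun_prop), rlJ_smul y₀ (fun _ => 1), rlJ_smul, rlJ_smul,
        rlJ_one hb ht.1,
        rlJ_id hb ht.1, rlJ_comp hα hb ht.1 hY, rlJ_comp hα hb ht.1 hH]
    have hp : t ^ (α * n + α) = (t ^ α) ^ (n + 1) := by
      rw [← Real.rpow_natCast, ← Real.rpow_mul ht.1]
      push_cast
      ring_nf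
    have hp1 : t ^ (α * n + α + 1) = (t ^ α) ^ (n + 1) * t := by
      rw [Real.rpow_add_one' ht.1 (by linarith), hp]
    rw [e, hp1, hp]
    push_cast
    rw [show α * ((n : ℝ) + 1) = α * n + α by ring]
    rw [mul_pow]
    ring

open MeasureTheory Set in
theorem ml_integral {α M t : ℝ} (hα : 1 < α) (ht : 0 ≤ t) {H : ℝ → ℝ} (hH : Continuous H) :
    HasSum (fun k : ℕ => M ^ k * rlJ (α * k + α) H t)
      (∫ τ in (0 : ℝ)..t, (t - τ) ^ (α - 1) * mlE α α (M * (t - τ) ^ α) * H τ) := by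
  obtain ⟨C, hC⟩ := (isCompact_Icc (a := (0 : ℝ)) (b := t)).exists_bound_of_continuousOn
    hH.continuousOn
  have hC0 : 0 ≤ C := (norm_nonneg _).trans (hC 0 ⟨le_refl _, ht⟩)
  have hfun : (fun k : ℕ => M ^ k * rlJ (α * k + α) H t) = fun k : ℕ =>
      ∫ τ in (0 : ℝ)..t, (t - τ) ^ (α - 1) *
        ((M * (t - τ) ^ α) ^ k / Real.Gamma (α * k + α)) * H τ := by
    ext k
    unfold rlJ
    rw [← mul_assoc, ← intervalIntegral.integral_const_mul]
    apply intervalIntegral.integral_congr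
    intro s hs
    rw [uIcc_of_le ht] at hs
    have h0 : 0 ≤ t - s := by linarith [hs.2]
    have hk : (0 : ℝ) ≤ α * k := by positivity
    have : (t - s) ^ (α * k + α - 1) = (t - s) ^ (α - 1) * ((t - s) ^ α) ^ k := by
      rw [← Real.rpow_natCast, ← Real.rpow_mul h0, ← Real.rpow_add_of_nonneg h0 (by linarith) hk]
      ring_nf
    simp only
    rw [this, mul_pow]
    ring
  rw [hfun]
  have hs := (ml_summable hα.le hα.le (|M| * t ^ α)).mul_left (t ^ (α - 1) * C)
  apply intervalIntegral.hasSum_integral_of_dominated_convergence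
    (fun (k : ℕ) _ => t ^ (α - 1) * C * ((|M| * t ^ α) ^ k / Real.Gamma (α * k + α)))
  · intro k
    apply Continuous.aestronglyMeasurable
    have h1 := rlJ_kernel_cont hα.le t
    have h2 : Continuous (fun s : ℝ => (t - s) ^ α) :=
      (Real.continuous_rpow_const (by linarith)).comp (by fun_prop)
    fun_prop
  · intro k
    refine Filter.Eventually.of_forall fun s hs => ?_
    rw [uIoc_of_le ht] at hs
    have h0 : 0 ≤ t - s := by linarith [hs.2]
    have h1 : t - s ≤ t := by linarith [hs.1]
    have hk : (0 : ℝ) ≤ α * k := by positivity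
    have hG := Real.Gamma_pos_of_pos (show 0 < α * k + α by linarith)
    rw [norm_mul, norm_mul, norm_div, norm_pow, norm_mul, Real.norm_of_nonneg hG.le,
      Real.norm_of_nonneg (Real.rpow_nonneg h0 _), Real.norm_of_nonneg (Real.rpow_nonneg h0 _),
      Real.norm_eq_abs M]
    have hHs := hC s ⟨hs.1.le, hs.2⟩
    calc _ ≤ t ^ (α - 1) * ((|M| * t ^ α) ^ k / Real.Gamma (α * k + α)) * C := by
          have := Real.rpow_nonneg h0 α
          have := Real.rpow_nonneg ht (α - 1)
          have := Real.rpow_nonneg ht α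
          have : (t - s) ^ (α - 1) ≤ t ^ (α - 1) := Real.rpow_le_rpow h0 h1 (by linarith)
          have : (t - s) ^ α ≤ t ^ α := Real.rpow_le_rpow h0 h1 (by linarith)
          gcongr
      _ = _ := by ring
  · exact Filter.Eventually.of_forall fun _ _ => hs
  · exact intervalIntegrable_const
  · refine Filter.Eventually.of_forall fun s _ => ?_
    exact ((ml_summable hα.le hα.le (M * (t - s) ^ α)).hasSum.mul_left _).mul_right _

/-- Variation-of-constants formula for `D^α y = M y + g(t,y)`, `α ∈ (1,2)`. -/
theorem variation_of_constants
    (α T M L y₀ y₁ : ℝ) (hα₁ : 1 < α) (hα₂ : α < 2) (hT : 0 < T)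
    (g : ℝ → ℝ → ℝ)
    (hg_cont : ContinuousOn (fun p : ℝ × ℝ => g p.1 p.2) (Set.Icc 0 T ×ˢ Set.univ))
    (hg_lip : ∀ t ∈ Set.Icc (0 : ℝ) T, ∀ x y : ℝ, |g t x - g t y| ≤ L * |x - y|)
    (y : ℝ → ℝ) (hy_cont : ContinuousOn y (Set.Icc 0 T))
    (hy : ∀ t ∈ Set.Icc (0 : ℝ) T,
      y t = y₀ + y₁ * t
        + (1 / Real.Gamma α)
          * ∫ s in (0 : ℝ)..t, (t - s) ^ (α - 1) * (M * y s + g s (y s))) :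
    ∀ t ∈ Set.Icc (0 : ℝ) T,
      y t = y₀ * mlE α 1 (M * t ^ α) + y₁ * t * mlE α 2 (M * t ^ α)
        + ∫ τ in (0 : ℝ)..t, (t - τ) ^ (α - 1) * mlE α α (M * (t - τ) ^ α) * g τ (y τ) := by
  have hh : ContinuousOn (fun s => g s (y s)) (Set.Icc 0 T) :=
    hg_cont.comp (f := fun s => (s, y s)) (continuousOn_id.prodMk hy_cont)
      (fun s hs => ⟨hs, Set.mem_univ _⟩)
  obtain ⟨Y, hYc, hYe⟩ : ∃ Y : ℝ → ℝ, Continuous Y ∧ ∀ s ∈ Set.Icc 0 T, Y s = y s :=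
    ⟨Set.IccExtend hT.le ((Set.Icc 0 T).domRestrict y), hy_cont.domRestrict.Icc_extend',
      fun s hs => Set.IccExtend_of_mem _ _ hs⟩
  obtain ⟨H, hHc, hHe⟩ : ∃ H : ℝ → ℝ, Continuous H ∧ ∀ s ∈ Set.Icc 0 T, H s = g s (y s) :=
    ⟨Set.IccExtend hT.le ((Set.Icc 0 T).domRestrict (fun s => g s (y s))),
      hh.domRestrict.Icc_extend', fun s hs => Set.IccExtend_of_mem _ _ hs⟩
  have key : ∀ t ∈ Set.Icc (0 : ℝ) T, Y t = y₀ + y₁ * t + M * rlJ α Y t + rlJ α H t := by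
    intro t ht
    rw [hYe t ht, hy t ht, ← rlJ_smul, add_assoc (y₀ + y₁ * t),
      ← rlJ_add hα₁.le (by fun_prop) hHc]
    congr 1
    change rlJ α (fun s => M * y s + g s (y s)) t = _
    apply rlJ_congr ht.1
    intro s hs
    rw [hYe s ⟨hs.1, hs.2.trans ht.2⟩, hHe s ⟨hs.1, hs.2.trans ht.2⟩]
  intro t ht
  have hint : ∫ τ in (0 : ℝ)..t, (t - τ) ^ (α - 1) * mlE α α (M * (t - τ) ^ α) * g τ (y τ)
      = ∫ τ in (0 : ℝ)..t, (t - τ) ^ (α - 1) * mlE α α (M * (t - τ) ^ α) * H τ := by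
    apply intervalIntegral.integral_congr
    intro s hs
    rw [Set.uIcc_of_le ht.1] at hs
    simp only
    rw [hHe s ⟨hs.1, hs.2.trans ht.2⟩]
  rw [hint, ← hYe t ht]
  have hsum := (((ml_summable hα₁.le (le_refl 1) (M * t ^ α)).hasSum.mul_left y₀).add
    ((ml_summable hα₁.le (show (1 : ℝ) ≤ 2 by norm_num) (M * t ^ α)).hasSum.mul_left
      (y₁ * t))).add (ml_integral (M := M) hα₁ ht.1 hHc)
  have hlim := (Filter.tendsto_add_atTop_iff_nat 1).2 hsum.tendsto_sum_nat
  have hrem : Filter.Tendsto (fun n : ℕ => M ^ (n + 1) * rlJ (α * n + α) Y t) Filter.atTop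
      (nhds 0) := by
    obtain ⟨C, hC⟩ := (isCompact_Icc (a := (0 : ℝ)) (b := t)).exists_bound_of_continuousOn
      hYc.continuousOn
    have hz := (ml_summable hα₁.le (le_refl 1) (|M| * t ^ α)).tendsto_atTop_zero
    have hz' := ((Filter.tendsto_add_atTop_iff_nat 1).2 hz).const_mul C
    rw [mul_zero] at hz'
    refine squeeze_zero_norm (fun n => ?_) hz'
    have hb : 1 ≤ α * n + α := by
      have : (0 : ℝ) ≤ n := by positivity
      nlinarith
    have hp : t ^ (α * n + α) = (t ^ α) ^ (n + 1) := by
      rw [← Real.rpow_natCast, ← Real.rpow_mul ht.1]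
      push_cast
      ring_nf
    rw [norm_mul, norm_pow, Real.norm_eq_abs, Real.norm_eq_abs]
    have hB := rlJ_bound hb ht.1 hYc hC
    rw [hp] at hB
    calc |M| ^ (n + 1) * |rlJ (α * n + α) Y t|
        ≤ |M| ^ (n + 1) * (C * ((t ^ α) ^ (n + 1) / Real.Gamma (α * n + α + 1))) := by
          gcongr
      _ = _ := by
          push_cast
          rw [mul_pow, show α * ((n : ℝ) + 1) = α * n + α by ring]
          ring
  have htot := hlim.add hrem
  have hconst : Filter.Tendsto (fun _ : ℕ => Y t) Filter.atTop (nhds (Y t)) :=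
    tendsto_const_nhds
  have huniq := tendsto_nhds_unique (hconst.congr fun n =>
    iterate_formula hα₁ hYc hHc key t ht n) htot
  rw [huniq, add_zero]
  rfl
end

section
/- Let α > 0, m = ⌈α⌉, T > 0, M ∈ ℝ, real numbers y₀, …, y_{m−1}, and let g : [0,T] × ℝ → ℝ be continuous and Lipschitz continuous in its second variable. Let y : [0,T] → ℝ be continuous and satisfy y(t) = ∑_{ℓ=0}^{m−1} y_ℓ t^ℓ / ℓ! + (1/Γ(α)) ∫₀ᵗ (t−s)^{α−1} (M y(s) + g(s, y(s))) ds for all t ∈ [0,T]. Then for all t ∈ [0,T], y(t) = ∑_{ℓ=0}^{m−1} y_ℓ t^ℓ E_{α,ℓ+1}(M t^α) + ∫₀ᵗ (t−τ)^{α−1} E_{α,α}(M (t−τ)^α) g(τ, y(τ)) dτ. -/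
section VC

open MeasureTheory Set Filter Topology

lemma vc_beta0 {a b c : ℝ} (ha : 0 < a) (hb : 0 < b) (hc : 0 < c) :
    ∫ x in (0:ℝ)..c, x ^ (b - 1) * (c - x) ^ (a - 1)
      = Real.Gamma a * Real.Gamma b / Real.Gamma (a + b) * c ^ (a + b - 1) := by
  have h := Complex.betaIntegral_scaled (b : ℂ) (a : ℂ) hc
  rw [Complex.betaIntegral_eq_Gamma_mul_div _ _ (by simpa) (by simpa)] at h
  have h2 : ∫ x in (0:ℝ)..c, (x : ℂ) ^ ((b:ℂ) - 1) * ((c : ℂ) - x) ^ ((a:ℂ) - 1)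
      = ∫ x in (0:ℝ)..c, ((x ^ (b - 1) * (c - x) ^ (a - 1) : ℝ) : ℂ) := by
    apply intervalIntegral.integral_congr
    intro x hx
    rw [uIcc_of_le hc.le] at hx
    have h1 : 0 ≤ x := hx.1
    have h3 : 0 ≤ c - x := by linarith [hx.2]
    simp only
    rw [Complex.ofReal_mul, Complex.ofReal_cpow h1, Complex.ofReal_cpow h3]
    push_cast
    rfl
  rw [h2, intervalIntegral.integral_ofReal] at h
  apply Complex.ofReal_injective
  rw [h]
  rw [Complex.ofReal_mul, Complex.ofReal_cpow hc.le, Complex.ofReal_div, Complex.ofReal_mul,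
    ← Complex.Gamma_ofReal, ← Complex.Gamma_ofReal, ← Complex.Gamma_ofReal]
  push_cast
  rw [add_comm (b:ℂ) a]
  ring

lemma vc_beta {a b r t : ℝ} (ha : 0 < a) (hb : 0 < b) (hc : r < t) :
    ∫ s in r..t, (t - s) ^ (a - 1) * (s - r) ^ (b - 1)
      = Real.Gamma a * Real.Gamma b / Real.Gamma (a + b) * (t - r) ^ (a + b - 1) := by
  rw [← vc_beta0 ha hb (sub_pos.2 hc)]
  have := intervalIntegral.integral_comp_sub_right (a := r) (b := t)
    (fun x => x ^ (b - 1) * (t - r - x) ^ (a - 1)) r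
  rw [sub_self] at this
  rw [← this]
  apply intervalIntegral.integral_congr
  intro s _
  simp only
  rw [mul_comm]
  congr 2
  ring

lemma vc_beta_integrable {a b r t : ℝ} (ha : 0 < a) (hb : 0 < b) (hc : r < t) :
    IntervalIntegrable (fun s => (t - s) ^ (a - 1) * (s - r) ^ (b - 1)) volume r t := by
  by_contra h
  have h1 := intervalIntegral.integral_undef h
  rw [vc_beta ha hb hc] at h1
  have := Real.Gamma_pos_of_pos ha
  have := Real.Gamma_pos_of_pos hb
  have := Real.Gamma_pos_of_pos (add_pos ha hb)
  have := Real.rpow_pos_of_pos (sub_pos.2 hc) (a + b - 1)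
  have : 0 < Real.Gamma a * Real.Gamma b / Real.Gamma (a + b) * (t - r) ^ (a + b - 1) := by
    positivity
  linarith

lemma vc_ker_integrable {a t : ℝ} (ha : 0 < a) :
    IntervalIntegrable (fun s => (t - s) ^ (a - 1)) volume 0 t := by
  have h := (intervalIntegral.intervalIntegrable_rpow' (a := t) (b := 0) (r := a - 1)
    (by linarith)).comp_sub_left t
  simpa using h

lemma vc_ker_mul {a t : ℝ} (ha : 0 < a) {f : ℝ → ℝ} (hf : Continuous f) :
    IntervalIntegrable (fun s => (t - s) ^ (a - 1) * f s) volume 0 t :=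
  (vc_ker_integrable ha).mul_continuousOn hf.continuousOn

/-- Riemann-Liouville integral. -/
noncomputable def vcJ (a : ℝ) (f : ℝ → ℝ) (t : ℝ) : ℝ :=
  (1 / Real.Gamma a) * ∫ s in (0 : ℝ)..t, (t - s) ^ (a - 1) * f s

lemma vc_fubini {a b t : ℝ} (ha : 0 < a) (hb : 0 < b) (ht : 0 ≤ t) {f : ℝ → ℝ}
    (hf : Continuous f) :
    ∫ s in (0:ℝ)..t, (t - s) ^ (a - 1) * ∫ r in (0:ℝ)..s, (s - r) ^ (b - 1) * f r
      = Real.Gamma a * Real.Gamma b / Real.Gamma (a + b)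
        * ∫ r in (0:ℝ)..t, (t - r) ^ (a + b - 1) * f r := by
  classical
  set C := Real.Gamma a * Real.Gamma b / Real.Gamma (a + b)
  let S : Set (ℝ × ℝ) := {p | 0 < p.2 ∧ p.2 < p.1 ∧ p.1 < t}
  have hS : MeasurableSet S := by
    apply MeasurableSet.inter
    · exact measurableSet_lt measurable_const measurable_snd
    apply MeasurableSet.inter
    · exact measurableSet_lt measurable_snd measurable_fst
    · exact measurableSet_lt measurable_fst measurable_const
  let h : ℝ × ℝ → ℝ := fun p => (t - p.1) ^ (a - 1) * ((p.1 - p.2) ^ (b - 1) * f p.2)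
  have hh : Measurable h := by
    have := hf.measurable
    fun_prop
  let F : ℝ → ℝ → ℝ := fun s r => S.indicator h (s, r)
  have e1 : ∀ r, (fun s => F s r) = (Ioo 0 t).indicator (fun r => (Ioo r t).indicator
      (fun s => ((t - s) ^ (a - 1) * (s - r) ^ (b - 1)) * f r)) r := by
    intro r
    ext s
    by_cases h0 : r ∈ Ioo 0 t
    · rw [indicator_of_mem h0]
      by_cases h1 : s ∈ Ioo r t
      · rw [indicator_of_mem h1]
        have : (s, r) ∈ S := ⟨h0.1, h1.1, h1.2⟩
        simp only [F, indicator_of_mem this, h]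
        ring
      · rw [indicator_of_notMem h1]
        have : (s, r) ∉ S := fun hm => h1 ⟨hm.2.1, hm.2.2⟩
        simp only [F, indicator_of_notMem this]
    · rw [indicator_of_notMem h0]
      have : (s, r) ∉ S := fun hm => h0 ⟨hm.1, hm.2.1.trans hm.2.2⟩
      simp only [F, indicator_of_notMem this, Pi.zero_apply]
  have e2 : ∀ s, (fun r => F s r) = (Ioo 0 t).indicator (fun s => (Ioo 0 s).indicator
      (fun r => (t - s) ^ (a - 1) * ((s - r) ^ (b - 1) * f r))) s := by
    intro s
    ext r
    by_cases h0 : s ∈ Ioo 0 t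
    · rw [indicator_of_mem h0]
      by_cases h1 : r ∈ Ioo 0 s
      · rw [indicator_of_mem h1]
        have : (s, r) ∈ S := ⟨h1.1, h1.2, h0.2⟩
        simp only [F, indicator_of_mem this, h]
      · rw [indicator_of_notMem h1]
        have : (s, r) ∉ S := fun hm => h1 ⟨hm.1, hm.2.1⟩
        simp only [F, indicator_of_notMem this]
    · rw [indicator_of_notMem h0]
      have : (s, r) ∉ S := fun hm => h0 ⟨hm.1.trans hm.2.1, hm.2.2⟩
      simp only [F, indicator_of_notMem this, Pi.zero_apply]
  have i1 : ∀ r, Integrable (fun s => F s r) := by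
    intro r
    rw [e1]
    by_cases h0 : r ∈ Ioo 0 t
    · rw [indicator_of_mem h0, integrable_indicator_iff measurableSet_Ioo]
      have := (vc_beta_integrable ha hb h0.2).mul_const (f r)
      rwa [intervalIntegrable_iff_integrableOn_Ioo_of_le h0.2.le] at this
    · rw [indicator_of_notMem h0]
      exact integrable_zero _ _ _
  have v1 : ∀ r, ∫ s, F s r = (Ioo 0 t).indicator (fun r => C * ((t - r) ^ (a + b - 1) * f r)) r := by
    intro r
    rw [e1]
    by_cases h0 : r ∈ Ioo 0 t
    · rw [indicator_of_mem h0, indicator_of_mem h0, integral_indicator measurableSet_Ioo,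
        ← integral_Ioc_eq_integral_Ioo, ← intervalIntegral.integral_of_le h0.2.le,
        intervalIntegral.integral_mul_const, vc_beta ha hb h0.2]
      ring
    · rw [indicator_of_notMem h0, indicator_of_notMem h0]
      simp
  have v1' : ∀ r, ∫ s, ‖F s r‖ =
      (Ioo 0 t).indicator (fun r => C * ((t - r) ^ (a + b - 1) * |f r|)) r := by
    intro r
    have e1' : (fun s => ‖F s r‖) = (Ioo 0 t).indicator (fun r => (Ioo r t).indicator
      (fun s => ((t - s) ^ (a - 1) * (s - r) ^ (b - 1)) * |f r|)) r := by
      ext s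
      have := congrFun (e1 r) s
      rw [this]
      by_cases h0 : r ∈ Ioo 0 t
      · rw [indicator_of_mem h0, indicator_of_mem h0]
        by_cases h1 : s ∈ Ioo r t
        · rw [indicator_of_mem h1, indicator_of_mem h1, norm_mul, Real.norm_eq_abs,
            Real.norm_eq_abs, abs_of_nonneg]
          exact mul_nonneg (Real.rpow_nonneg (sub_nonneg.2 h1.2.le) _)
            (Real.rpow_nonneg (sub_nonneg.2 h1.1.le) _)
        · rw [indicator_of_notMem h1, indicator_of_notMem h1, norm_zero]
      · rw [indicator_of_notMem h0, indicator_of_notMem h0]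
        simp
    rw [e1']
    by_cases h0 : r ∈ Ioo 0 t
    · rw [indicator_of_mem h0, indicator_of_mem h0, integral_indicator measurableSet_Ioo,
        ← integral_Ioc_eq_integral_Ioo, ← intervalIntegral.integral_of_le h0.2.le,
        intervalIntegral.integral_mul_const, vc_beta ha hb h0.2]
      ring
    · rw [indicator_of_notMem h0, indicator_of_notMem h0]
      simp
  have hint : Integrable (Function.uncurry F) (volume.prod volume) := by
    have hm : Measurable (Function.uncurry F) := hh.indicator hS
    rw [integrable_prod_iff' hm.aestronglyMeasurable]
    refine ⟨Eventually.of_forall i1, ?_⟩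
    simp only [Function.uncurry_apply_pair]
    rw [funext v1', integrable_indicator_iff measurableSet_Ioo]
    have := (vc_ker_mul (t := t) (add_pos ha hb) hf.abs).const_mul C
    rwa [intervalIntegrable_iff_integrableOn_Ioo_of_le ht] at this
  have key := integral_integral_swap hint
  have v2 : ∀ s, ∫ r, F s r = (Ioo 0 t).indicator
      (fun s => (t - s) ^ (a - 1) * ∫ r in (0:ℝ)..s, (s - r) ^ (b - 1) * f r) s := by
    intro s
    rw [e2]
    by_cases h0 : s ∈ Ioo 0 t
    · rw [indicator_of_mem h0, indicator_of_mem h0, integral_indicator measurableSet_Ioo,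
        ← integral_Ioc_eq_integral_Ioo, ← intervalIntegral.integral_of_le h0.1.le,
        intervalIntegral.integral_const_mul]
    · rw [indicator_of_notMem h0, indicator_of_notMem h0]
      simp
  rw [funext v1, funext v2, integral_indicator measurableSet_Ioo,
    integral_indicator measurableSet_Ioo, ← integral_Ioc_eq_integral_Ioo,
    ← integral_Ioc_eq_integral_Ioo, ← intervalIntegral.integral_of_le ht,
    ← intervalIntegral.integral_of_le ht, intervalIntegral.integral_const_mul] at key
  exact key

lemma vcJ_comp {a b t : ℝ} (ha : 0 < a) (hb : 0 < b) (ht : 0 ≤ t) {f : ℝ → ℝ}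
    (hf : Continuous f) : vcJ a (vcJ b f) t = vcJ (a + b) f t := by
  have h := vc_fubini ha hb ht hf
  have := (Real.Gamma_pos_of_pos ha).ne'
  have := (Real.Gamma_pos_of_pos hb).ne'
  have := (Real.Gamma_pos_of_pos (add_pos ha hb)).ne'
  unfold vcJ
  have e : ∀ s, (t - s) ^ (a - 1) * (1 / Real.Gamma b * ∫ r in (0:ℝ)..s, (s - r) ^ (b - 1) * f r)
    = 1 / Real.Gamma b * ((t - s) ^ (a - 1) * ∫ r in (0:ℝ)..s, (s - r) ^ (b - 1) * f r) := by
    intro s; ring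
  simp_rw [e]
  rw [intervalIntegral.integral_const_mul, h]
  field_simp

lemma vcJ_congr {a t : ℝ} (ht : 0 ≤ t) {f g : ℝ → ℝ} (h : ∀ s ∈ Icc 0 t, f s = g s) :
    vcJ a f t = vcJ a g t := by
  unfold vcJ
  congr 1
  apply intervalIntegral.integral_congr
  intro s hs
  rw [uIcc_of_le ht] at hs
  simp only [h s hs]

lemma vcJ_add {a t : ℝ} (ha : 0 < a) {f g : ℝ → ℝ} (hf : Continuous f) (hg : Continuous g) :
    vcJ a (fun s => f s + g s) t = vcJ a f t + vcJ a g t := by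
  unfold vcJ
  rw [← mul_add, ← intervalIntegral.integral_add (vc_ker_mul ha hf) (vc_ker_mul ha hg)]
  simp_rw [mul_add]

lemma vcJ_const_mul {a t c : ℝ} {f : ℝ → ℝ} :
    vcJ a (fun s => c * f s) t = c * vcJ a f t := by
  unfold vcJ
  simp_rw [mul_left_comm _ c]
  rw [intervalIntegral.integral_const_mul]
  ring

lemma vcJ_sum {a t : ℝ} (ha : 0 < a) (n : ℕ) {f : ℕ → ℝ → ℝ} (hf : ∀ i, Continuous (f i)) :
    vcJ a (fun s => ∑ i ∈ Finset.range n, f i s) t = ∑ i ∈ Finset.range n, vcJ a (f i) t := by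
  induction n with
  | zero => simp [vcJ]
  | succ n ih =>
    simp_rw [Finset.sum_range_succ]
    rw [vcJ_add ha (by fun_prop) (hf n), ih]

lemma vcJ_mono {a t : ℝ} (ha : 0 < a) (ht : 0 ≤ t) (l : ℕ) :
    vcJ a (fun s => s ^ l / (Nat.factorial l : ℝ)) t = t ^ l * t ^ a / Real.Gamma (a + l + 1) := by
  rcases ht.eq_or_lt with rfl | ht
  · simp [vcJ, Real.zero_rpow ha.ne']
  have hl : (0:ℝ) < (l:ℝ) + 1 := by positivity
  have h := vc_beta ha hl ht
  have e : ∀ s : ℝ, (t - s) ^ (a - 1) * (s ^ l / (Nat.factorial l : ℝ))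
      = 1 / (Nat.factorial l : ℝ) * ((t - s) ^ (a - 1) * (s - 0) ^ ((l:ℝ) + 1 - 1)) := by
    intro s
    rw [add_sub_cancel_right, Real.rpow_natCast, sub_zero]; ring
  unfold vcJ
  simp_rw [e]
  rw [intervalIntegral.integral_const_mul, h, Real.Gamma_nat_eq_factorial, sub_zero,
    ← add_assoc, add_sub_cancel_right, Real.rpow_add ht, Real.rpow_natCast]
  have := (Real.Gamma_pos_of_pos ha).ne'
  have : (Nat.factorial l : ℝ) ≠ 0 := by positivity
  field_simp

lemma vcJ_bound {a t C : ℝ} (ha : 0 < a) (ht : 0 ≤ t) {f : ℝ → ℝ}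
    (hC : ∀ s, |f s| ≤ C) : |vcJ a f t| ≤ C * (t ^ a / Real.Gamma (a + 1)) := by
  have hG := Real.Gamma_pos_of_pos ha
  have h1 := vcJ_mono ha ht 0
  have h2 : vcJ a (fun s => C * (s ^ 0 / (Nat.factorial 0 : ℝ))) t = C * (t ^ a / Real.Gamma (a + 1)) := by
    rw [vcJ_const_mul, h1]; simp
  rw [← h2]
  unfold vcJ
  rw [abs_mul, abs_of_pos (by positivity)]
  apply mul_le_mul_of_nonneg_left _ (by positivity)
  rw [← Real.norm_eq_abs]
  apply intervalIntegral.norm_integral_le_of_norm_le ht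
  · refine Eventually.of_forall fun s hs => ?_
    rw [norm_mul, Real.norm_eq_abs, Real.norm_eq_abs,
      abs_of_nonneg (Real.rpow_nonneg (sub_nonneg.2 hs.2) _)]
    apply mul_le_mul_of_nonneg_left _ (Real.rpow_nonneg (sub_nonneg.2 hs.2) _)
    simpa using hC s
  · exact vc_ker_mul ha (by fun_prop)

lemma vc_Gamma_lower {A x : ℝ} (hA : 0 < A) (hx : 1 ≤ x) :
    A ^ (x - 1) * Real.exp (-A) ≤ Real.Gamma x := by
  rw [Real.Gamma_eq_integral (by linarith), ← integral_exp_neg_Ioi A, ← integral_const_mul]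
  have hI := Real.GammaIntegral_convergent (s := x) (by linarith)
  have hs : Ioi A ⊆ Ioi 0 := Ioi_subset_Ioi hA.le
  calc _ ≤ ∫ s in Ioi A, Real.exp (-s) * s ^ (x - 1) := by
        apply setIntegral_mono_on _ (hI.mono_set hs) measurableSet_Ioi
        · intro s hs
          rw [mul_comm]
          gcongr
          exact le_of_lt hs
        · exact (integrableOn_exp_neg_Ioi A).const_mul _
    _ ≤ _ := by
        apply setIntegral_mono_set hI
        · refine (ae_restrict_iff' measurableSet_Ioi).2 (Eventually.of_forall fun s hs => ?_)
          have : (0:ℝ) < s := hs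
          simp only [Pi.zero_apply]
          positivity
        · exact hs.eventuallyLE

lemma vc_summable {α : ℝ} (hα : 0 < α) (β z : ℝ) :
    Summable (fun k : ℕ => z ^ k / Real.Gamma (α * k + β)) := by
  obtain ⟨A, hA, hAz⟩ : ∃ A : ℝ, 0 < A ∧ 2 * (|z| + 1) = A ^ α := by
    refine ⟨(2 * (|z| + 1)) ^ (α⁻¹), by positivity, ?_⟩
    rw [← Real.rpow_mul (by positivity), inv_mul_cancel₀ hα.ne', Real.rpow_one]
  have hs : Summable (fun k : ℕ => (Real.exp A * A ^ (1 - β)) * (1 / 2 : ℝ) ^ k) :=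
    (summable_geometric_of_lt_one (by norm_num) (by norm_num)).mul_left _
  refine Summable.of_norm_bounded_eventually_nat hs ?_
  have h1 : ∀ᶠ k : ℕ in atTop, 1 ≤ α * k + β := by
    have : Tendsto (fun k : ℕ => α * (k:ℝ) + β) atTop atTop :=
      tendsto_atTop_add_const_right _ _ (tendsto_natCast_atTop_atTop.const_mul_atTop hα)
    exact this.eventually_ge_atTop 1
  filter_upwards [h1] with k hk
  have hG := vc_Gamma_lower hA hk
  have hp : 0 < A ^ (α * k + β - 1) * Real.exp (-A) := by positivity
  rw [norm_div, norm_pow, Real.norm_eq_abs, Real.norm_eq_abs, abs_of_pos (hp.trans_le hG)]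
  have e : A ^ (α * k + β - 1) * Real.exp (-A) = (A ^ α) ^ k / (Real.exp A * A ^ (1 - β)) := by
    rw [show α * k + β - 1 = α * k - (1 - β) by ring, Real.rpow_sub hA, Real.rpow_mul hA.le,
      Real.rpow_natCast, Real.exp_neg]
    field_simp
  calc |z| ^ k / Real.Gamma (α * k + β) ≤ |z| ^ k / (A ^ (α * k + β - 1) * Real.exp (-A)) := by
        gcongr
    _ = (Real.exp A * A ^ (1 - β)) * (|z| / A ^ α) ^ k := by
        rw [e, div_pow]; field_simp
    _ ≤ _ := by
        have h0 : |z| / A ^ α ≤ 1 / 2 := by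
          rw [← hAz, div_le_iff₀ (by positivity)]
          linarith [abs_nonneg z]
        exact mul_le_mul_of_nonneg_left (pow_le_pow_left₀ (by positivity) h0 k) (by positivity)

lemma vc_iter {α T M : ℝ} (hα : 0 < α) {p Y G : ℝ → ℝ} (hp : Continuous p) (hY : Continuous Y)
    (hG : Continuous G)
    (h : ∀ t ∈ Icc 0 T, Y t = p t + vcJ α (fun s => M * Y s + G s) t) (n : ℕ) :
    ∀ t ∈ Icc 0 T, Y t = (p t + ∑ k ∈ Finset.range n, M ^ (k + 1) * vcJ (α * ((k + 1 : ℕ) : ℝ)) p t)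
      + ∑ k ∈ Finset.range (n + 1), M ^ k * vcJ (α * k + α) G t
      + M ^ (n + 1) * vcJ (α * n + α) Y t := by
  induction n with
  | zero =>
    intro t ht
    rw [h t ht, vcJ_add hα (by fun_prop) hG, vcJ_const_mul]
    simp
    ring
  | succ n ih =>
    intro t ht
    have ha : 0 < α * n + α := by positivity
    have e : vcJ (α * n + α) Y t = vcJ (α * n + α) p t +
        (M * vcJ (α * n + α + α) Y t + vcJ (α * n + α + α) G t) := by
      have h1 : vcJ (α * n + α) Y t = vcJ (α * n + α) (fun s => p s + (Y s - p s)) t := by simp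
      rw [h1, vcJ_add ha hp (by fun_prop)]
      congr 1
      rw [vcJ_congr (g := vcJ α (fun s => M * Y s + G s)) ht.1, vcJ_comp ha hα ht.1 (by fun_prop),
        vcJ_add (by positivity) (by fun_prop) hG, vcJ_const_mul]
      intro s hs
      rw [h s ⟨hs.1, hs.2.trans ht.2⟩]
      ring
    rw [Finset.sum_range_succ _ n, Finset.sum_range_succ _ (n + 1), ih t ht, e]
    push_cast
    rw [mul_add α (n:ℝ) 1, mul_one]
    ring

lemma vc_hasSum_poly {α M t : ℝ} (hα : 0 < α) (ht : 0 ≤ t) (m : ℕ) (yv : ℕ → ℝ) (p : ℝ → ℝ)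
    (hp : p = fun s => ∑ ℓ ∈ Finset.range m, yv ℓ * s ^ ℓ / (Nat.factorial ℓ : ℝ)) :
    Tendsto (fun n : ℕ => p t + ∑ k ∈ Finset.range n, M ^ (k + 1) * vcJ (α * ((k + 1 : ℕ) : ℝ)) p t)
      atTop (𝓝 (∑ ℓ ∈ Finset.range m, yv ℓ * t ^ ℓ * mlE α ((ℓ : ℝ) + 1) (M * t ^ α))) := by
  have hs : HasSum (fun k : ℕ => ∑ ℓ ∈ Finset.range m, yv ℓ * t ^ ℓ *
      ((M * t ^ α) ^ k / Real.Gamma (α * k + ((ℓ : ℝ) + 1))))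
      (∑ ℓ ∈ Finset.range m, yv ℓ * t ^ ℓ * mlE α ((ℓ : ℝ) + 1) (M * t ^ α)) := by
    apply hasSum_sum
    intro l _
    exact (vc_summable hα ((l : ℝ) + 1) (M * t ^ α)).hasSum.mul_left _
  have h1 := hs.tendsto_sum_nat.comp (tendsto_add_atTop_nat 1)
  refine h1.congr fun n => ?_
  simp only [Function.comp_apply]
  rw [Finset.sum_range_succ', add_comm]
  congr 1
  · rw [hp]
    apply Finset.sum_congr rfl
    intro l _
    simp [Real.Gamma_nat_eq_factorial]
    ring
  · apply Finset.sum_congr rfl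
    intro k _
    have ha : 0 < α * ((k + 1 : ℕ) : ℝ) := by positivity
    have e : p = fun s => ∑ ℓ ∈ Finset.range m, yv ℓ * (s ^ ℓ / (Nat.factorial ℓ : ℝ)) := by
      rw [hp]; simp_rw [mul_div_assoc]
    rw [e, vcJ_sum ha m (by intro i; fun_prop), Finset.mul_sum]
    apply Finset.sum_congr rfl
    intro l _
    rw [vcJ_const_mul, vcJ_mono ha ht, Real.rpow_mul ht, Real.rpow_natCast, mul_pow, add_assoc]
    ring

lemma vc_hasSum_int {α M t C : ℝ} (hα : 0 < α) (ht : 0 ≤ t) {G : ℝ → ℝ}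
    (hG : Continuous G) (hC : ∀ s, |G s| ≤ C) :
    HasSum (fun k : ℕ => M ^ k * vcJ (α * k + α) G t)
      (∫ τ in (0 : ℝ)..t, (t - τ) ^ (α - 1) * mlE α α (M * (t - τ) ^ α) * G τ) := by
  have hs := vc_summable hα α (|M| * t ^ α)
  have hC0 : 0 ≤ C := (abs_nonneg _).trans (hC 0)
  have key : HasSum (fun k : ℕ => ∫ τ in (0 : ℝ)..t, (t - τ) ^ (α - 1) *
      ((M * (t - τ) ^ α) ^ k / Real.Gamma (α * k + α)) * G τ)
      (∫ τ in (0 : ℝ)..t, (t - τ) ^ (α - 1) * mlE α α (M * (t - τ) ^ α) * G τ) := by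
    apply intervalIntegral.hasSum_integral_of_dominated_convergence
      (bound := fun (k : ℕ) (τ : ℝ) => (t - τ) ^ (α - 1) * C *
        ((|M| * t ^ α) ^ k / Real.Gamma (α * k + α)))
    · intro k
      have := hG.measurable
      apply Measurable.aestronglyMeasurable
      fun_prop
    · intro k
      refine Eventually.of_forall fun s hs => ?_
      rw [uIoc_of_le ht] at hs
      have h0 : 0 ≤ t - s := sub_nonneg.2 hs.2
      have hΓ : 0 < Real.Gamma (α * k + α) := Real.Gamma_pos_of_pos (by positivity)
      have h2 : (t - s) ^ α ≤ t ^ α := Real.rpow_le_rpow h0 (by linarith [hs.1]) hα.le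
      have h3 : 0 ≤ (t - s) ^ α := Real.rpow_nonneg h0 _
      have h4 : 0 ≤ (t - s) ^ (α - 1) := Real.rpow_nonneg h0 _
      rw [norm_mul, norm_mul, norm_div, norm_pow, norm_mul]
      simp only [Real.norm_eq_abs]
      rw [abs_of_nonneg h3, abs_of_nonneg h4, abs_of_pos hΓ, mul_right_comm]
      gcongr
      exact hC s
    · exact Eventually.of_forall fun s _ => hs.mul_left _
    · simp_rw [tsum_mul_left]
      exact ((vc_ker_integrable hα).mul_const _).mul_const _
    · refine Eventually.of_forall fun s _ => ?_
      exact ((vc_summable hα α (M * (t - s) ^ α)).hasSum.mul_left _).mul_right _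
  convert key using 2 with k
  unfold vcJ
  rw [← mul_assoc, ← intervalIntegral.integral_const_mul]
  apply intervalIntegral.integral_congr_Ioo_of_le ht
  intro s hs
  have h0 : 0 < t - s := sub_pos.2 hs.2
  simp only
  rw [show α * k + α - 1 = (α - 1) + α * k by ring, Real.rpow_add h0, Real.rpow_mul h0.le,
    Real.rpow_natCast, mul_pow]
  ring

lemma vc_main {α T M C D : ℝ} (hα : 0 < α) (m : ℕ) (yv : ℕ → ℝ) {Y G : ℝ → ℝ}
    (hY : Continuous Y) (hG : Continuous G) (hC : ∀ s, |Y s| ≤ C) (hD : ∀ s, |G s| ≤ D)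
    (h : ∀ t ∈ Icc 0 T, Y t = (∑ ℓ ∈ Finset.range m, yv ℓ * t ^ ℓ / (Nat.factorial ℓ : ℝ))
      + vcJ α (fun s => M * Y s + G s) t) :
    ∀ t ∈ Icc 0 T, Y t =
      (∑ ℓ ∈ Finset.range m, yv ℓ * t ^ ℓ * mlE α ((ℓ : ℝ) + 1) (M * t ^ α))
        + ∫ τ in (0 : ℝ)..t, (t - τ) ^ (α - 1) * mlE α α (M * (t - τ) ^ α) * G τ := by
  intro t ht
  set p : ℝ → ℝ := fun s => ∑ ℓ ∈ Finset.range m, yv ℓ * s ^ ℓ / (Nat.factorial ℓ : ℝ) with hp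
  have hpc : Continuous p := by rw [hp]; fun_prop
  have t1 := vc_hasSum_poly (M := M) hα ht.1 m yv p hp
  have t2 := (vc_hasSum_int (M := M) hα ht.1 hG hD).tendsto_sum_nat.comp (tendsto_add_atTop_nat 1)
  have t3 : Tendsto (fun n : ℕ => M ^ (n + 1) * vcJ (α * n + α) Y t) atTop (𝓝 0) := by
    have hs := (vc_summable hα 1 (|M| * t ^ α)).tendsto_atTop_zero.comp (tendsto_add_atTop_nat 1)
    have hs' := hs.const_mul C
    rw [mul_zero] at hs'
    refine squeeze_zero_norm (fun n => ?_) hs'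
    have hb := vcJ_bound (a := α * n + α) (by positivity) ht.1 hC
    rw [norm_mul, norm_pow, Real.norm_eq_abs, Real.norm_eq_abs]
    refine (mul_le_mul_of_nonneg_left hb (by positivity)).trans (le_of_eq ?_)
    have e : α * n + α = α * ((n + 1 : ℕ) : ℝ) := by push_cast; ring
    simp only [Function.comp_apply]
    rw [e, Real.rpow_mul ht.1, Real.rpow_natCast, mul_pow]
    ring
  have t4 := (t1.add t2).add t3
  rw [add_zero] at t4
  refine tendsto_nhds_unique (tendsto_const_nhds (x := Y t)) (t4.congr fun n => ?_)
  exact (vc_iter hα hpc hY hG h n t ht).symm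

end VC

open Set in
/-- General variation-of-constants formula for `D^α y = M y + g(t,y)` with
arbitrary `α > 0` and `m = ⌈α⌉` initial data. -/
theorem variation_of_constants_general
    (α T M L : ℝ) (hα : 0 < α) (hT : 0 < T) (yv : ℕ → ℝ)
    (g : ℝ → ℝ → ℝ)
    (hg_cont : ContinuousOn (fun p : ℝ × ℝ => g p.1 p.2) (Set.Icc 0 T ×ˢ Set.univ))
    (hg_lip : ∀ t ∈ Set.Icc (0 : ℝ) T, ∀ x y : ℝ, |g t x - g t y| ≤ L * |x - y|)
    (y : ℝ → ℝ) (hy_cont : ContinuousOn y (Set.Icc 0 T))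
    (hy : ∀ t ∈ Set.Icc (0 : ℝ) T,
      y t = (∑ ℓ ∈ Finset.range ⌈α⌉₊, yv ℓ * t ^ ℓ / (Nat.factorial ℓ : ℝ))
        + (1 / Real.Gamma α)
          * ∫ s in (0 : ℝ)..t, (t - s) ^ (α - 1) * (M * y s + g s (y s))) :
    ∀ t ∈ Set.Icc (0 : ℝ) T,
      y t = (∑ ℓ ∈ Finset.range ⌈α⌉₊, yv ℓ * t ^ ℓ * mlE α ((ℓ : ℝ) + 1) (M * t ^ α))
        + ∫ τ in (0 : ℝ)..t, (t - τ) ^ (α - 1) * mlE α α (M * (t - τ) ^ α) * g τ (y τ) := by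
  intro t ht
  have hT' : (0 : ℝ) ≤ T := hT.le
  have hGc : ContinuousOn (fun s => g s (y s)) (Icc 0 T) :=
    hg_cont.comp (f := fun s => (s, y s)) (continuousOn_id.prodMk hy_cont)
      (fun s hs => ⟨hs, mem_univ _⟩)
  have ext : ∀ f : ℝ → ℝ, ContinuousOn f (Icc 0 T) → ∃ F : ℝ → ℝ, ∃ C : ℝ, Continuous F ∧
      (∀ s, |F s| ≤ C) ∧ ∀ s ∈ Icc 0 T, F s = f s := by
    intro f hf
    obtain ⟨C, hC⟩ := isCompact_Icc.exists_bound_of_continuousOn hf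
    refine ⟨IccExtend hT' ((Icc 0 T).domRestrict f), C, hf.domRestrict.Icc_extend', ?_, ?_⟩
    · intro s
      exact hC _ (projIcc 0 T hT' s).2
    · intro s hs
      rw [IccExtend_of_mem hT' _ hs]
      rfl
  obtain ⟨Y, C, hYc, hC, hYe⟩ := ext y hy_cont
  obtain ⟨G, D, hGc', hD, hGe⟩ := ext _ hGc
  have key := vc_main (T := T) (M := M) hα ⌈α⌉₊ yv hYc hGc' hC hD (by
    intro t ht
    rw [hYe t ht, hy t ht]
    congr 1
    apply vcJ_congr ht.1
    intro s hs
    have hs' : s ∈ Icc 0 T := ⟨hs.1, hs.2.trans ht.2⟩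
    rw [hYe s hs', hGe s hs']) t ht
  rw [← hYe t ht, key]
  congr 1
  apply intervalIntegral.integral_congr
  intro s hs
  rw [uIcc_of_le ht.1] at hs
  simp only
  rw [hGe s ⟨hs.1, hs.2.trans ht.2⟩]
end

section
/- Let α ∈ (1,2), T > 0, let a : [0,T] → ℝ be continuous, set L := max_{t∈[0,T]} |a(t)|, and for t ∈ [0,T] define a₋(t) := min_{τ∈[0,t]} a(τ). Let y₁, y₂ : [0,T] → ℝ be continuous and satisfy yₖ(t) = y_{k,0} + y_{k,1} t + (1/Γ(α)) ∫₀ᵗ (t−s)^{α−1} a(s) yₖ(s) ds for k = 1, 2, with y_{1,0} ≤ y_{2,0} and y_{1,1} ≤ y_{2,1}. Suppose T* ∈ (0,T] is such that for all t ∈ [0,T*]: E_{α,α}(−L t^α) > 0 and either [(y_{2,0} − y_{1,0}) E_{α,1}(−L t^α) + (y_{2,1} − y_{1,1}) t E_{α,2}(−L t^α) > 0] or [y_{1,0} = y_{2,0}, y_{1,1} < y_{2,1}, and E_{α,2}(−L t^α) > 0]. Then for all t ∈ [0,T*]: |y₂(t) − y₁(t)| ≥ |y_{2,0} − y_{1,0}|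 · E_{α,1}(a₋(t) t^α) + |y_{2,1} − y_{1,1}| · t E_{α,2}(a₋(t) t^α). -/
open MeasureTheory Set Filter Topology in
lemma aux_beta (r t p q : ℝ) (hrt : r ≤ t) (hp : 1 ≤ p) (hq : 1 ≤ q) :
    ∫ s in r..t, (t - s) ^ (p - 1) * (s - r) ^ (q - 1)
      = Real.Gamma p * Real.Gamma q / Real.Gamma (p + q) * (t - r) ^ (p + q - 1) := by
  rcases hrt.eq_or_lt with rfl | hrt
  · have : p + q - 1 ≠ 0 := by linarith
    simp [Real.zero_rpow this]
  have hd : 0 < t - r := by linarith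
  have h1 := intervalIntegral.integral_comp_sub_right
    (a := r) (b := t) (fun x => (t - r - x) ^ (p - 1) * x ^ (q - 1)) r
  have h2 : ∫ s in r..t, (t - s) ^ (p - 1) * (s - r) ^ (q - 1)
      = ∫ x in (0:ℝ)..(t - r), (t - r - x) ^ (p - 1) * x ^ (q - 1) := by
    rw [sub_self] at h1
    rw [← h1]
    congr 1
    ext s
    congr 2
    ring
  rw [h2]
  have h3 := Complex.betaIntegral_scaled (q : ℂ) (p : ℂ) hd
  rw [Complex.betaIntegral_eq_Gamma_mul_div _ _ (by simp; linarith) (by simp; linarith)] at h3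
  have h4 : (∫ x in (0:ℝ)..(t - r), (x : ℂ) ^ ((q : ℂ) - 1) * (((t - r : ℝ) : ℂ) - x) ^ ((p : ℂ) - 1))
      = ((∫ x in (0:ℝ)..(t - r), (t - r - x) ^ (p - 1) * x ^ (q - 1) : ℝ) : ℂ) := by
    rw [← intervalIntegral.integral_ofReal]
    apply intervalIntegral.integral_congr
    intro x hx
    rw [uIcc_of_le hd.le] at hx
    simp only
    have e1 : (x : ℂ) ^ ((q : ℂ) - 1) = ((x ^ (q - 1) : ℝ) : ℂ) := by
      rw [Complex.ofReal_cpow hx.1]; push_cast; rfl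
    have e2 : (((t - r : ℝ) : ℂ) - x) ^ ((p : ℂ) - 1) = (((t - r - x) ^ (p - 1) : ℝ) : ℂ) := by
      rw [Complex.ofReal_cpow (by linarith [hx.2])]; push_cast; rfl
    rw [e1, e2]
    push_cast
    ring
  rw [h4] at h3
  have e3 : ((t - r : ℝ) : ℂ) ^ ((q : ℂ) + p - 1) = (((t - r) ^ (p + q - 1) : ℝ) : ℂ) := by
    rw [Complex.ofReal_cpow hd.le]; push_cast; congr 1; ring
  rw [e3, ← Complex.ofReal_add, Complex.Gamma_ofReal, Complex.Gamma_ofReal,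
    Complex.Gamma_ofReal] at h3
  have h5 : (∫ x in (0:ℝ)..(t - r), (t - r - x) ^ (p - 1) * x ^ (q - 1))
      = (t - r) ^ (p + q - 1) * (Real.Gamma q * Real.Gamma p / Real.Gamma (q + p)) := by
    exact_mod_cast h3
  rw [h5, add_comm q p]
  ring

lemma aux_summable (α β z : ℝ) (hα : 1 < α) (hβ : 1 ≤ β) :
    Summable (fun k : ℕ => z ^ k / Real.Gamma (α * k + β)) := by
  have h := (Real.summable_pow_div_factorial |z|)
  refine Summable.of_norm_bounded_eventually_nat (g := fun k : ℕ => |z| ^ k / (Nat.factorial k)) h ?_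
  filter_upwards [Filter.eventually_ge_atTop 1] with k hk
  have hk1 : (1 : ℝ) ≤ k := by exact_mod_cast hk
  have hle : (k : ℝ) + 1 ≤ α * k + β := by nlinarith
  have hG : (Nat.factorial k : ℝ) ≤ Real.Gamma (α * k + β) := by
    rw [← Real.Gamma_nat_eq_factorial]
    exact Real.Gamma_strictMonoOn_Ici.monotoneOn (by simp; linarith) (by simp; linarith) hle
  have hf : (0 : ℝ) < Nat.factorial k := by exact_mod_cast Nat.factorial_pos k
  rw [norm_div, norm_pow, Real.norm_eq_abs, Real.norm_eq_abs, abs_of_pos (hf.trans_le hG)]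
  gcongr

lemma aux_abs_le (α β z Z : ℝ) (hα : 1 < α) (hβ : 1 ≤ β) (hz : |z| ≤ Z) :
    |mlE α β z| ≤ mlE α β Z := by
  unfold mlE
  rw [← Real.norm_eq_abs]
  refine tsum_of_norm_bounded (aux_summable α β Z hα hβ).hasSum ?_
  intro k
  have : 0 < Real.Gamma (α * k + β) := Real.Gamma_pos_of_pos (by positivity)
  rw [norm_div, norm_pow, Real.norm_eq_abs, Real.norm_eq_abs, abs_of_pos this]
  gcongr

open MeasureTheory Set Filter Topology in
lemma aux_swap (α γ t : ℝ) (hα : 1 < α) (hγ : 1 < γ) (ht : 0 ≤ t) (w : ℝ → ℝ) (hw : Continuous w) :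
    ∫ s in (0:ℝ)..t, (t - s) ^ (γ - 1) * ∫ r in (0:ℝ)..s, (s - r) ^ (α - 1) * w r
      = Real.Gamma γ * Real.Gamma α / Real.Gamma (γ + α) *
        ∫ r in (0:ℝ)..t, (t - r) ^ (γ + α - 1) * w r := by
  have hα' : 0 < α - 1 := by linarith
  have hγ' : 0 < γ - 1 := by linarith
  have hcα : Continuous (fun x : ℝ => x ^ (α - 1)) := Real.continuous_rpow_const hα'.le
  have hcγ : Continuous (fun x : ℝ => x ^ (γ - 1)) := Real.continuous_rpow_const hγ'.le
  let F : ℝ → ℝ → ℝ := fun s r => (t - s) ^ (γ - 1) * ((max (s - r) 0) ^ (α - 1) * w r)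
  have hF : Continuous F.uncurry := by
    have h1 : Continuous (fun p : ℝ × ℝ => (t - p.1) ^ (γ - 1)) := hcγ.comp (by fun_prop)
    have h2 : Continuous (fun p : ℝ × ℝ => (max (p.1 - p.2) 0) ^ (α - 1)) := hcα.comp (by fun_prop)
    exact h1.mul (h2.mul (hw.comp continuous_snd))
  have hint : IntegrableOn F.uncurry (uIoc 0 t ×ˢ uIoc 0 t) := by
    have : IntegrableOn F.uncurry (uIcc 0 t ×ˢ uIcc 0 t) :=
      hF.continuousOn.integrableOn_compact (isCompact_uIcc.prod isCompact_uIcc)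
    exact this.mono_set (prod_mono uIoc_subset_uIcc uIoc_subset_uIcc)
  have hsw := intervalIntegral_intervalIntegral_swap hint
  have hL : ∫ s in (0:ℝ)..t, (t - s) ^ (γ - 1) * ∫ r in (0:ℝ)..s, (s - r) ^ (α - 1) * w r
      = ∫ s in (0:ℝ)..t, ∫ r in (0:ℝ)..t, F s r := by
    apply intervalIntegral.integral_congr
    intro s hs
    rw [uIcc_of_le ht] at hs
    simp only [F]
    rw [intervalIntegral.integral_const_mul]
    congr 1
    have hc : Continuous (fun r : ℝ => (max (s - r) 0) ^ (α - 1) * w r) :=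
      (hcα.comp (by fun_prop : Continuous (fun r : ℝ => max (s - r) 0))).mul hw
    rw [← intervalIntegral.integral_add_adjacent_intervals (hc.intervalIntegrable 0 s)
      (hc.intervalIntegrable s t)]
    have z : ∫ r in s..t, (max (s - r) 0) ^ (α - 1) * w r = 0 := by
      apply intervalIntegral.integral_zero_ae
      refine ae_of_all _ fun r hr => ?_
      rw [uIoc_of_le hs.2] at hr
      rw [max_eq_right (by linarith [hr.1]), Real.zero_rpow hα'.ne', zero_mul]
    rw [z, add_zero]
    apply intervalIntegral.integral_congr
    intro r hr
    rw [uIcc_of_le hs.1] at hr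
    simp only
    rw [max_eq_left (by linarith [hr.2])]
  rw [hL, hsw, ← intervalIntegral.integral_const_mul]
  apply intervalIntegral.integral_congr
  intro r hr
  rw [uIcc_of_le ht] at hr
  simp only [F]
  have e : ∀ s, (t - s) ^ (γ - 1) * ((max (s - r) 0) ^ (α - 1) * w r)
      = ((t - s) ^ (γ - 1) * (max (s - r) 0) ^ (α - 1)) * w r := fun s => by ring
  simp_rw [e]
  rw [intervalIntegral.integral_mul_const, ← mul_assoc]
  congr 1
  rw [← aux_beta r t γ α hr.2 hγ.le hα.le]
  have hc : Continuous (fun s : ℝ => (t - s) ^ (γ - 1) * (max (s - r) 0) ^ (α - 1)) :=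
    (hcγ.comp (by fun_prop : Continuous (fun s : ℝ => t - s))).mul
      (hcα.comp (by fun_prop : Continuous (fun s : ℝ => max (s - r) 0)))
  rw [← intervalIntegral.integral_add_adjacent_intervals (hc.intervalIntegrable 0 r)
      (hc.intervalIntegrable r t)]
  have z : ∫ s in (0:ℝ)..r, (t - s) ^ (γ - 1) * (max (s - r) 0) ^ (α - 1) = 0 := by
    apply intervalIntegral.integral_zero_ae
    refine ae_of_all _ fun s hs => ?_
    rw [uIoc_of_le hr.1] at hs
    rw [max_eq_right (by linarith [hs.2]), Real.zero_rpow hα'.ne', mul_zero]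
  rw [z, zero_add]
  apply intervalIntegral.integral_congr
  intro s hs
  rw [uIcc_of_le hr.2] at hs
  simp only
  rw [max_eq_left (by linarith [hs.1])]

open MeasureTheory Set Filter Topology in
lemma aux_step (α γ t u0 u1 : ℝ) (hα : 1 < α) (hγ : 1 < γ) (ht : 0 ≤ t) (u w : ℝ → ℝ)
    (hw : Continuous w) (hu : Continuous u)
    (heq : ∀ s ∈ Icc (0:ℝ) t, u s = u0 + u1 * s
      + (1 / Real.Gamma α) * ∫ r in (0:ℝ)..s, (s - r) ^ (α - 1) * w r) :
    (1 / Real.Gamma γ) * ∫ s in (0:ℝ)..t, (t - s) ^ (γ - 1) * u s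
      = u0 * (t ^ γ / Real.Gamma (γ + 1)) + u1 * (t ^ (γ + 1) / Real.Gamma (γ + 2))
        + (1 / Real.Gamma (γ + α)) * ∫ s in (0:ℝ)..t, (t - s) ^ (γ + α - 1) * w s := by
  have hGα : Real.Gamma α ≠ 0 := (Real.Gamma_pos_of_pos (by linarith)).ne'
  have hGγ : Real.Gamma γ ≠ 0 := (Real.Gamma_pos_of_pos (by linarith)).ne'
  have hGγ2 : Real.Gamma (γ + 2) ≠ 0 := (Real.Gamma_pos_of_pos (by linarith)).ne'
  have hcγ : Continuous (fun s : ℝ => (t - s) ^ (γ - 1)) :=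
    (Real.continuous_rpow_const (by linarith : 0 ≤ γ - 1)).comp (by fun_prop)
  have h1 := aux_beta 0 t γ 1 ht hγ.le le_rfl
  have h2 := aux_beta 0 t γ 2 ht hγ.le one_le_two
  have h3 := aux_swap α γ t hα hγ ht w hw
  have g2 : Real.Gamma 2 = 1 := Real.Gamma_two
  simp only [sub_self, Real.rpow_zero, mul_one, Real.Gamma_one, sub_zero,
    show (2:ℝ) - 1 = 1 by norm_num, Real.rpow_one, g2, show γ + 1 - 1 = γ by ring,
    show γ + 2 - 1 = γ + 1 by ring] at h1 h2
  have e : ∫ s in (0:ℝ)..t, (t - s) ^ (γ - 1) * u s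
      = ∫ s in (0:ℝ)..t, (u0 * (t - s) ^ (γ - 1) + u1 * ((t - s) ^ (γ - 1) * s)
        + (1 / Real.Gamma α) * ((t - s) ^ (γ - 1) * ∫ r in (0:ℝ)..s, (s - r) ^ (α - 1) * w r)) := by
    apply intervalIntegral.integral_congr
    intro s hs
    rw [uIcc_of_le ht] at hs
    simp only
    rw [heq s hs]
    ring
  have i1 : IntervalIntegrable (fun s : ℝ => u0 * (t - s) ^ (γ - 1)) volume 0 t :=
    (continuous_const.mul hcγ).intervalIntegrable _ _
  have i2 : IntervalIntegrable (fun s : ℝ => u1 * ((t - s) ^ (γ - 1) * s)) volume 0 t :=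
    (continuous_const.mul (hcγ.mul continuous_id)).intervalIntegrable _ _
  have i3 : IntervalIntegrable (fun s : ℝ => (1 / Real.Gamma α) *
      ((t - s) ^ (γ - 1) * ∫ r in (0:ℝ)..s, (s - r) ^ (α - 1) * w r)) volume 0 t := by
    have : ContinuousOn (fun s : ℝ => (t - s) ^ (γ - 1) * (u s - u0 - u1 * s)) (uIcc 0 t) := by
      apply Continuous.continuousOn
      exact hcγ.mul (by fun_prop)
    refine (this.congr ?_).intervalIntegrable
    intro s hs
    rw [uIcc_of_le ht] at hs
    simp only
    rw [heq s hs]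
    ring
  rw [e, intervalIntegral.integral_add (i1.add i2) i3, intervalIntegral.integral_add i1 i2,
    intervalIntegral.integral_const_mul, intervalIntegral.integral_const_mul,
    intervalIntegral.integral_const_mul, h1, h2, h3]
  field_simp

open MeasureTheory Set Filter Topology in
lemma aux_hasSum_int (α c t : ℝ) (hα : 1 < α) (ht : 0 ≤ t) (h : ℝ → ℝ) (hh : Continuous h) :
    HasSum (fun n : ℕ => ∫ s in (0:ℝ)..t,
        (t - s) ^ (α - 1) * ((c * (t - s) ^ α) ^ n / Real.Gamma (α * n + α)) * h s)
      (∫ s in (0:ℝ)..t, (t - s) ^ (α - 1) * mlE α α (c * (t - s) ^ α) * h s) := by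
  obtain ⟨H, hH⟩ := (isCompact_Icc (a := (0:ℝ)) (b := t)).exists_bound_of_continuousOn hh.continuousOn
  have hsum := aux_summable α α (|c| * t ^ α) hα hα.le
  have hc1 : Continuous (fun s : ℝ => (t - s) ^ (α - 1)) :=
    (Real.continuous_rpow_const (by linarith : 0 ≤ α - 1)).comp (by fun_prop)
  have hc2 : Continuous (fun s : ℝ => (t - s) ^ α) :=
    (Real.continuous_rpow_const (by linarith : 0 ≤ α)).comp (by fun_prop)
  apply intervalIntegral.hasSum_integral_of_dominated_convergence
    (fun (n : ℕ) (_ : ℝ) => t ^ (α - 1) * ((|c| * t ^ α) ^ n / Real.Gamma (α * n + α)) * H)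
  · intro n
    exact ((hc1.mul (((continuous_const.mul hc2).pow n).div_const _)).mul hh).aestronglyMeasurable
  · intro n
    refine ae_of_all _ fun s hs => ?_
    rw [uIoc_of_le ht] at hs
    have hts : 0 ≤ t - s := by linarith [hs.2]
    have hts' : t - s ≤ t := by linarith [hs.1]
    have hG : 0 < Real.Gamma (α * n + α) := Real.Gamma_pos_of_pos (by positivity)
    have := hH s ⟨hs.1.le, hs.2⟩
    rw [norm_mul, norm_mul, norm_div, norm_pow, norm_mul, Real.norm_of_nonneg hG.le,
      Real.norm_of_nonneg (Real.rpow_nonneg hts _), Real.norm_of_nonneg (Real.rpow_nonneg hts _),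
      Real.norm_eq_abs c]
    have a1 : (t - s) ^ (α - 1) ≤ t ^ (α - 1) := Real.rpow_le_rpow hts hts' (by linarith)
    have a2 : (t - s) ^ α ≤ t ^ α := Real.rpow_le_rpow hts hts' (by linarith)
    have a3 : 0 ≤ (t - s) ^ α := Real.rpow_nonneg hts _
    have a4 : 0 ≤ t ^ (α - 1) := Real.rpow_nonneg ht _
    have a5 : 0 ≤ t ^ α := Real.rpow_nonneg ht _
    gcongr
  · exact ae_of_all _ fun s _ => (hsum.mul_left _).mul_right _
  · exact intervalIntegrable_const
  · refine ae_of_all _ fun s _ => ?_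
    exact ((aux_summable α α (c * (t - s) ^ α) hα hα.le).hasSum.mul_left _).mul_right _

open MeasureTheory Set Filter Topology in
lemma aux_pow_int (α c t : ℝ) (hα : 1 < α) (ht : 0 ≤ t) (w : ℝ → ℝ) (n : ℕ) :
    ∫ s in (0:ℝ)..t, (t - s) ^ (α - 1) * ((c * (t - s) ^ α) ^ n / Real.Gamma (α * n + α)) * w s
      = c ^ n * ((1 / Real.Gamma (α * n + α)) *
          ∫ s in (0:ℝ)..t, (t - s) ^ (α * n + α - 1) * w s) := by
  rw [← intervalIntegral.integral_const_mul, ← intervalIntegral.integral_const_mul]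
  apply intervalIntegral.integral_congr
  intro s hs
  rw [uIcc_of_le ht] at hs
  have hts : 0 ≤ t - s := by linarith [hs.2]
  simp only
  have e : (t - s) ^ (α * n + α - 1) = (t - s) ^ (α - 1) * ((t - s) ^ α) ^ n := by
    rw [← Real.rpow_mul_natCast hts, ← Real.rpow_add_of_nonneg hts (by linarith) (by positivity)]
    congr 1; ring
  rw [e, mul_pow]
  ring

open MeasureTheory Set Filter Topology in
lemma aux_partial (α c t u0 u1 : ℝ) (hα : 1 < α) (ht : 0 ≤ t) (u h : ℝ → ℝ)
    (hh : Continuous h) (hu : Continuous u)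
    (heq : ∀ s ∈ Icc (0:ℝ) t, u s = u0 + u1 * s
      + (1 / Real.Gamma α) * ∫ r in (0:ℝ)..s, (s - r) ^ (α - 1) * (c * u r + h r)) (N : ℕ) :
    u t = ∑ n ∈ Finset.range (N + 1), (u0 * ((c * t ^ α) ^ n / Real.Gamma (α * n + 1))
        + u1 * (t * ((c * t ^ α) ^ n / Real.Gamma (α * n + 2)))
        + ∫ s in (0:ℝ)..t,
          (t - s) ^ (α - 1) * ((c * (t - s) ^ α) ^ n / Real.Gamma (α * n + α)) * h s)
      + c * ∫ s in (0:ℝ)..t,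
          (t - s) ^ (α - 1) * ((c * (t - s) ^ α) ^ N / Real.Gamma (α * N + α)) * u s := by
  have hsplit : ∀ p : ℝ, 0 ≤ p → ∫ s in (0:ℝ)..t, (t - s) ^ p * (c * u s + h s)
      = c * (∫ s in (0:ℝ)..t, (t - s) ^ p * u s) + ∫ s in (0:ℝ)..t, (t - s) ^ p * h s := by
    intro p hp
    have hc : Continuous (fun s : ℝ => (t - s) ^ p) :=
      (Real.continuous_rpow_const hp).comp (by fun_prop)
    rw [← intervalIntegral.integral_const_mul, ← intervalIntegral.integral_add]
    · congr 1; ext s; ring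
    · exact (continuous_const.mul (hc.mul hu)).intervalIntegrable _ _
    · exact (hc.mul hh).intervalIntegrable _ _
  induction N with
  | zero =>
    rw [zero_add, Finset.sum_range_one, aux_pow_int α c t hα ht, aux_pow_int α c t hα ht]
    rw [heq t ⟨ht, le_rfl⟩, hsplit _ (by linarith)]
    simp
    ring
  | succ N ih =>
    rw [Finset.sum_range_succ]
    rw [ih]
    rw [add_assoc]
    congr 1
    rw [aux_pow_int α c t hα ht, aux_pow_int α c t hα ht, aux_pow_int α c t hα ht]
    have hγ : 1 < α * N + α := by nlinarith [Nat.cast_nonneg (α := ℝ) N]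
    have hst := aux_step α (α * N + α) t u0 u1 hα hγ ht u (fun r => c * u r + h r)
      (by fun_prop) hu heq
    rw [hst, hsplit _ (by linarith)]
    have e1 : t ^ (α * N + α) = (t ^ α) ^ (N + 1) := by
      rw [← Real.rpow_mul_natCast ht]; congr 1; push_cast; ring
    have e2 : t ^ (α * N + α + 1) = t * (t ^ α) ^ (N + 1) := by
      rw [Real.rpow_add_of_nonneg ht (by linarith) zero_le_one, Real.rpow_one, e1, mul_comm]
    rw [e1, e2]
    push_cast
    rw [show α * ((N:ℝ) + 1) = α * N + α by ring, mul_pow]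
    ring

open MeasureTheory Set Filter Topology in
lemma aux_repr (α c t u0 u1 : ℝ) (hα : 1 < α) (ht : 0 ≤ t) (u h : ℝ → ℝ)
    (hh : Continuous h) (hu : Continuous u)
    (heq : ∀ s ∈ Icc (0:ℝ) t, u s = u0 + u1 * s
      + (1 / Real.Gamma α) * ∫ r in (0:ℝ)..s, (s - r) ^ (α - 1) * (c * u r + h r)) :
    u t = u0 * mlE α 1 (c * t ^ α) + u1 * (t * mlE α 2 (c * t ^ α))
      + ∫ s in (0:ℝ)..t, (t - s) ^ (α - 1) * mlE α α (c * (t - s) ^ α) * h s := by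
  have s1 := (aux_summable α 1 (c * t ^ α) hα le_rfl).hasSum.mul_left u0
  have s2 := ((aux_summable α 2 (c * t ^ α) hα one_le_two).hasSum.mul_left t).mul_left u1
  have s3 := aux_hasSum_int α c t hα ht h hh
  have s4 := (aux_hasSum_int α c t hα ht u hu).summable.tendsto_atTop_zero.const_mul c
  have s5 := ((((s1.add s2).add s3).tendsto_sum_nat).comp (tendsto_add_atTop_nat 1)).add s4
  have s6 : Tendsto (fun _ : ℕ => u t) atTop (𝓝 (u t)) := tendsto_const_nhds
  rw [mul_zero, add_zero] at s5
  refine tendsto_nhds_unique s6 (s5.congr fun N => ?_)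
  exact (aux_partial α c t u0 u1 hα ht u h hh hu heq N).symm

open MeasureTheory Set Filter Topology in
lemma aux_gronwall (v : ℝ → ℝ) (hv : Continuous v) (hv0 : ∀ s, 0 ≤ v s) (M T : ℝ)
    (hle : ∀ t ∈ Icc (0:ℝ) T, v t ≤ M * ∫ s in (0:ℝ)..t, v s) :
    ∀ t ∈ Icc (0:ℝ) T, v t = 0 := by
  have hd : ∀ x, HasDerivAt (fun t => ∫ s in (0:ℝ)..t, v s) (v x) x := fun x =>
    intervalIntegral.integral_hasDerivAt_right (hv.intervalIntegrable _ _)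
      hv.aestronglyMeasurable.stronglyMeasurableAtFilter hv.continuousAt
  have key := norm_le_gronwallBound_of_norm_deriv_right_le (f := fun t => ∫ s in (0:ℝ)..t, v s)
    (f' := v) (δ := 0) (K := M) (ε := 0) (a := 0) (b := T)
    (fun x _ => (hd x).continuousAt.continuousWithinAt)
    (fun x _ => (hd x).hasDerivWithinAt) (by simp) (by
      intro x hx
      rw [Real.norm_of_nonneg (hv0 x), Real.norm_of_nonneg
        (intervalIntegral.integral_nonneg hx.1 fun s _ => hv0 s), add_zero]
      exact hle x ⟨hx.1, hx.2.le⟩)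
  intro t ht
  have h1 := key t ht
  rw [gronwallBound_ε0_δ0] at h1
  have h2 : ∫ s in (0:ℝ)..t, v s = 0 := norm_le_zero_iff.mp h1
  have h3 := hle t ht
  rw [h2, mul_zero] at h3
  exact le_antisymm h3 (hv0 t)

lemma aux_zero (α β : ℝ) : mlE α β 0 = 1 / Real.Gamma β := by
  unfold mlE
  rw [tsum_eq_single 0]
  · simp
  · intro k hk
    simp [hk]

/-- Positivity of the kernel propagates to every coefficient `c ≥ -L`. -/
lemma aux_pos (α L T c : ℝ) (hα : 1 < α) (hcL : -L ≤ c)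
    (hpos : ∀ t ∈ Set.Icc (0 : ℝ) T, mlE α α (-(L * t ^ α)) > 0) (τ : ℝ)
    (hτ : τ ∈ Set.Icc (0 : ℝ) T) : 0 ≤ mlE α α (c * τ ^ α) := by
  have hτα : 0 ≤ τ ^ α := Real.rpow_nonneg hτ.1 _
  rcases le_or_gt 0 c with hc | hc
  · unfold mlE
    refine tsum_nonneg fun k => ?_
    have : 0 < Real.Gamma (α * k + α) := Real.Gamma_pos_of_pos (by positivity)
    positivity
  · have hL : 0 < L := by linarith
    have hq0 : 0 ≤ -c / L := div_nonneg (by linarith) hL.le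
    have hq1 : -c / L ≤ 1 := by rw [div_le_one hL]; linarith
    have hα0 : (0:ℝ) < α := by linarith
    have hr0 : 0 ≤ (-c / L) ^ (1 / α) := Real.rpow_nonneg hq0 _
    have hr1 : (-c / L) ^ (1 / α) ≤ 1 := Real.rpow_le_one hq0 hq1 (by positivity)
    have := hpos ((-c / L) ^ (1 / α) * τ) ⟨mul_nonneg hr0 hτ.1, by nlinarith [hτ.1, hτ.2]⟩
    rw [Real.mul_rpow hr0 hτ.1, ← Real.rpow_mul hq0, one_div_mul_cancel hα0.ne', Real.rpow_one,
      ← mul_assoc, mul_div_cancel₀ _ hL.ne'] at this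
    have e : -(-c * τ ^ α) = c * τ ^ α := by ring
    rw [e] at this
    exact this.le

open MeasureTheory Set Filter Topology in
/-- The core statement for globally continuous data. -/
lemma aux_core (α T L u0 u1 : ℝ) (hα : 1 < α) (hT : 0 < T) (a u : ℝ → ℝ)
    (ha : Continuous a) (hu : Continuous u)
    (hL : ∀ t ∈ Icc (0:ℝ) T, |a t| ≤ L)
    (heq : ∀ s ∈ Icc (0:ℝ) T, u s = u0 + u1 * s
      + (1 / Real.Gamma α) * ∫ r in (0:ℝ)..s, (s - r) ^ (α - 1) * (a r * u r))
    (hpos : ∀ t ∈ Icc (0 : ℝ) T, mlE α α (-(L * t ^ α)) > 0)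
    (hg : ∀ t ∈ Icc (0 : ℝ) T,
      0 ≤ u0 * mlE α 1 (-(L * t ^ α)) + u1 * (t * mlE α 2 (-(L * t ^ α)))) (t c : ℝ)
    (ht : t ∈ Icc (0:ℝ) T) (hcL : -L ≤ c) (hca : ∀ s ∈ Icc (0:ℝ) t, c ≤ a s) :
    u0 * mlE α 1 (c * t ^ α) + u1 * (t * mlE α 2 (c * t ^ α)) ≤ u t := by
  have hL0 : 0 ≤ L := (abs_nonneg _).trans (hL 0 ⟨le_rfl, hT.le⟩)
  have hrep : ∀ c, ∀ t ∈ Icc (0:ℝ) T, u t = u0 * mlE α 1 (c * t ^ α)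
      + u1 * (t * mlE α 2 (c * t ^ α))
      + ∫ s in (0:ℝ)..t, (t - s) ^ (α - 1) * mlE α α (c * (t - s) ^ α) * ((a s - c) * u s) := by
    intro c t ht
    refine aux_repr α c t u0 u1 hα ht.1 u (fun s => (a s - c) * u s) (by fun_prop) hu ?_
    intro s hs
    rw [heq s ⟨hs.1, hs.2.trans ht.2⟩]
    have e : ∀ r, c * u r + (a r - c) * u r = a r * u r := fun r => by ring
    simp_rw [e]
  have hk : ∀ c, -L ≤ c → ∀ t ∈ Icc (0:ℝ) T, ∀ s ∈ Icc (0:ℝ) t,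
      0 ≤ (t - s) ^ (α - 1) * mlE α α (c * (t - s) ^ α) := by
    intro c hc t ht s hs
    exact mul_nonneg (Real.rpow_nonneg (by linarith [hs.2]) _)
      (aux_pos α L T c hα hc hpos _ ⟨by linarith [hs.2], by linarith [hs.1, ht.2]⟩)
  -- nonnegativity of `u`
  let v : ℝ → ℝ := fun s => max (-u s) 0
  have hvc : Continuous v := by fun_prop
  have hv0 : ∀ s, 0 ≤ v s := fun s => le_max_right _ _
  have hvu : ∀ s, -u s ≤ v s := fun s => le_max_left _ _
  have hM0 : 0 ≤ mlE α α (L * T ^ α) :=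
    (abs_nonneg _).trans (aux_abs_le α α (L * T ^ α) (L * T ^ α) hα hα.le
      (abs_of_nonneg (mul_nonneg hL0 (Real.rpow_nonneg hT.le _))).le)
  have hT0 : 0 ≤ T ^ (α - 1) := Real.rpow_nonneg hT.le _
  let M : ℝ := T ^ (α - 1) * mlE α α (L * T ^ α) * (2 * L)
  have hM : 0 ≤ M := by positivity
  have hv : ∀ t ∈ Icc (0:ℝ) T, v t = 0 := by
    refine aux_gronwall v hvc hv0 M T ?_
    intro t ht
    have hI : 0 ≤ ∫ s in (0:ℝ)..t, v s := intervalIntegral.integral_nonneg ht.1 fun s _ => hv0 s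
    refine max_le ?_ (mul_nonneg hM hI)
    have hr := hrep (-L) t ht
    have hg' := hg t ht
    rw [neg_mul] at hr
    have hint : -(M * ∫ s in (0:ℝ)..t, v s) ≤ ∫ s in (0:ℝ)..t,
        (t - s) ^ (α - 1) * mlE α α (-L * (t - s) ^ α) * ((a s - -L) * u s) := by
      by_cases hi : IntervalIntegrable (fun s => (t - s) ^ (α - 1) * mlE α α (-L * (t - s) ^ α)
          * ((a s - -L) * u s)) volume 0 t
      · rw [← intervalIntegral.integral_const_mul, ← intervalIntegral.integral_neg]
        refine intervalIntegral.integral_mono_on ht.1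
          ((continuous_const.mul hvc).neg.intervalIntegrable _ _) hi ?_
        intro s hs
        have hsT : s ∈ Icc (0:ℝ) T := ⟨hs.1, hs.2.trans ht.2⟩
        have k0 := hk (-L) le_rfl t ht s hs
        have hts : 0 ≤ t - s := by linarith [hs.2]
        have htT : t - s ≤ T := by linarith [hs.1, ht.2]
        have k1 : (t - s) ^ (α - 1) * mlE α α (-L * (t - s) ^ α)
            ≤ T ^ (α - 1) * mlE α α (L * T ^ α) := by
          have b1 : (t - s) ^ (α - 1) ≤ T ^ (α - 1) := Real.rpow_le_rpow hts htT (by linarith)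
          have b2 : (t - s) ^ α ≤ T ^ α := Real.rpow_le_rpow hts htT (by linarith)
          have b3 : mlE α α (-L * (t - s) ^ α) ≤ mlE α α (L * T ^ α) := by
            refine (le_abs_self _).trans (aux_abs_le α α _ _ hα hα.le ?_)
            rw [abs_mul, abs_neg, abs_of_nonneg hL0, abs_of_nonneg (Real.rpow_nonneg hts _)]
            gcongr
          have b4 : 0 ≤ (t - s) ^ (α - 1) := Real.rpow_nonneg hts _
          calc _ ≤ (t - s) ^ (α - 1) * mlE α α (L * T ^ α) := by gcongr
            _ ≤ _ := by gcongr
        have ab := abs_le.mp (hL s hsT)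
        have c1 : 0 ≤ a s - -L := by linarith [ab.1]
        have c2 : a s - -L ≤ 2 * L := by linarith [ab.2]
        have d : (t - s) ^ (α - 1) * mlE α α (-L * (t - s) ^ α) * ((a s - -L) * -u s)
            ≤ M * v s := by
          calc _ ≤ (t - s) ^ (α - 1) * mlE α α (-L * (t - s) ^ α) * ((a s - -L) * v s) := by
                have := hvu s
                gcongr
            _ = ((t - s) ^ (α - 1) * mlE α α (-L * (t - s) ^ α)) * (a s - -L) * v s := by ring
            _ ≤ T ^ (α - 1) * mlE α α (L * T ^ α) * (2 * L) * v s := by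
                have := hv0 s
                gcongr
        have e : (t - s) ^ (α - 1) * mlE α α (-L * (t - s) ^ α) * ((a s - -L) * -u s)
          = -((t - s) ^ (α - 1) * mlE α α (-L * (t - s) ^ α) * ((a s - -L) * u s)) := by ring
        linarith
      · rw [intervalIntegral.integral_undef hi]
        have := mul_nonneg hM hI
        linarith
    simp only [neg_mul] at hint hr
    linarith
  have hu0 : ∀ s ∈ Icc (0:ℝ) T, 0 ≤ u s := by
    intro s hs
    have := hvu s
    rw [hv s hs] at this
    linarith
  rw [hrep c t ht]
  have : 0 ≤ ∫ s in (0:ℝ)..t,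
      (t - s) ^ (α - 1) * mlE α α (c * (t - s) ^ α) * ((a s - c) * u s) := by
    refine intervalIntegral.integral_nonneg ht.1 fun s hs => ?_
    exact mul_nonneg (hk c hcL t ht s hs)
      (mul_nonneg (by linarith [hca s hs]) (hu0 s ⟨hs.1, hs.2.trans ht.2⟩))
  linarith

/-- Lower separation bound in the linear case `f(t,y) = a(t) y`
(lower estimate of Theorem 2.9 of the paper). -/
theorem linear_separation_lower_bound
    (α T Tstar L y₁₀ y₁₁ y₂₀ y₂₁ : ℝ) (hα₁ : 1 < α) (hα₂ : α < 2) (hT : 0 < T)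
    (a alow : ℝ → ℝ)
    (ha_cont : ContinuousOn a (Set.Icc 0 T))
    (hL : IsGreatest ((fun t => |a t|) '' Set.Icc 0 T) L)
    (halow : ∀ t ∈ Set.Icc (0 : ℝ) T, IsLeast (a '' Set.Icc 0 t) (alow t))
    (y₁ y₂ : ℝ → ℝ)
    (hy₁cont : ContinuousOn y₁ (Set.Icc 0 T)) (hy₂cont : ContinuousOn y₂ (Set.Icc 0 T))
    (hy₁ : ∀ t ∈ Set.Icc (0 : ℝ) T,
      y₁ t = y₁₀ + y₁₁ * t
        + (1 / Real.Gamma α) * ∫ s in (0 : ℝ)..t, (t - s) ^ (α - 1) * (a s * y₁ s))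
    (hy₂ : ∀ t ∈ Set.Icc (0 : ℝ) T,
      y₂ t = y₂₀ + y₂₁ * t
        + (1 / Real.Gamma α) * ∫ s in (0 : ℝ)..t, (t - s) ^ (α - 1) * (a s * y₂ s))
    (h0 : y₁₀ ≤ y₂₀) (h1 : y₁₁ ≤ y₂₁)
    (hTstar : 0 < Tstar) (hTstarT : Tstar ≤ T)
    (hcond : ∀ t ∈ Set.Icc (0 : ℝ) Tstar,
      mlE α α (-(L * t ^ α)) > 0 ∧
        ((y₂₀ - y₁₀) * mlE α 1 (-(L * t ^ α))
            + (y₂₁ - y₁₁) * t * mlE α 2 (-(L * t ^ α)) > 0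
          ∨ (y₁₀ = y₂₀ ∧ y₁₁ < y₂₁ ∧ mlE α 2 (-(L * t ^ α)) > 0))) :
    ∀ t ∈ Set.Icc (0 : ℝ) Tstar,
      |y₂ t - y₁ t| ≥ |y₂₀ - y₁₀| * mlE α 1 (alow t * t ^ α)
        + |y₂₁ - y₁₁| * (t * mlE α 2 (alow t * t ^ α)) := by
  have hTs0 : (0:ℝ) ≤ T := hT.le
  let A : ℝ → ℝ := Set.IccExtend hTs0 ((Set.Icc 0 T).domRestrict a)
  let U : ℝ → ℝ := Set.IccExtend hTs0 ((Set.Icc 0 T).domRestrict (fun s => y₂ s - y₁ s))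
  have hA : Continuous A := (continuousOn_iff_continuous_domRestrict.mp ha_cont).Icc_extend'
  have hU : Continuous U :=
    (continuousOn_iff_continuous_domRestrict.mp (hy₂cont.sub hy₁cont)).Icc_extend'
  have hAe : ∀ s ∈ Set.Icc (0:ℝ) T, A s = a s := fun s hs => by
    simp [A, Set.IccExtend_of_mem hTs0 _ hs]
  have hUe : ∀ s ∈ Set.Icc (0:ℝ) T, U s = y₂ s - y₁ s := fun s hs => by
    simp [U, Set.IccExtend_of_mem hTs0 _ hs]
  have hLb : ∀ s ∈ Set.Icc (0:ℝ) T, |a s| ≤ L := fun s hs => hL.2 ⟨s, hs, rfl⟩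
  have hsub : ∀ s ∈ Set.Icc (0:ℝ) Tstar, s ∈ Set.Icc (0:ℝ) T :=
    fun s hs => ⟨hs.1, hs.2.trans hTstarT⟩
  have heq : ∀ s ∈ Set.Icc (0:ℝ) Tstar, U s = (y₂₀ - y₁₀) + (y₂₁ - y₁₁) * s
      + (1 / Real.Gamma α) * ∫ r in (0:ℝ)..s, (s - r) ^ (α - 1) * (A r * U r) := by
    intro s hs
    have hsT := hsub s hs
    have hint : ∀ y : ℝ → ℝ, ContinuousOn y (Set.Icc 0 T) →
        IntervalIntegrable (fun r => (s - r) ^ (α - 1) * (a r * y r)) MeasureTheory.volume 0 s := by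
      intro y hy
      apply ContinuousOn.intervalIntegrable
      rw [Set.uIcc_of_le hs.1]
      have hss : Set.Icc (0:ℝ) s ⊆ Set.Icc 0 T := Set.Icc_subset_Icc_right hsT.2
      have hc : Continuous (fun r : ℝ => (s - r) ^ (α - 1)) :=
        (Real.continuous_rpow_const (by linarith : 0 ≤ α - 1)).comp (by fun_prop)
      exact hc.continuousOn.mul ((ha_cont.mono hss).mul (hy.mono hss))
    have e : ∫ r in (0:ℝ)..s, (s - r) ^ (α - 1) * (A r * U r)
        = (∫ r in (0:ℝ)..s, (s - r) ^ (α - 1) * (a r * y₂ r))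
          - ∫ r in (0:ℝ)..s, (s - r) ^ (α - 1) * (a r * y₁ r) := by
      rw [← intervalIntegral.integral_sub (hint y₂ hy₂cont) (hint y₁ hy₁cont)]
      apply intervalIntegral.integral_congr
      intro r hr
      rw [Set.uIcc_of_le hs.1] at hr
      have hrT : r ∈ Set.Icc (0:ℝ) T := ⟨hr.1, hr.2.trans hsT.2⟩
      simp only
      rw [hAe r hrT, hUe r hrT]
      ring
    rw [e, hUe s hsT, hy₁ s hsT, hy₂ s hsT]
    ring
  intro t ht
  have htT := hsub t ht
  obtain ⟨⟨τ, hτ, hτe⟩, hlow⟩ := halow t htT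
  have hτT : τ ∈ Set.Icc (0:ℝ) T := ⟨hτ.1, hτ.2.trans htT.2⟩
  have key := aux_core α Tstar L (y₂₀ - y₁₀) (y₂₁ - y₁₁) hα₁ hTstar A U hA hU
    (fun s hs => by rw [hAe s (hsub s hs)]; exact hLb s (hsub s hs)) heq
    (fun s hs => (hcond s hs).1)
    (by
      intro s hs
      rcases (hcond s hs).2 with h | ⟨h, h', h''⟩
      · linarith
      · rw [h, sub_self, zero_mul, zero_add]
        exact mul_nonneg (by linarith) (mul_nonneg hs.1 h''.le))
    t (alow t) ht (by rw [← hτe]; exact (abs_le.mp (hLb τ hτT)).1)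
    (fun s hs => by
      rw [hAe s ⟨hs.1, hs.2.trans htT.2⟩]
      exact hlow ⟨s, hs, rfl⟩)
  rw [hUe t htT] at key
  rw [abs_of_nonneg (sub_nonneg.mpr h0), abs_of_nonneg (sub_nonneg.mpr h1)]
  exact key.trans (le_abs_self _)
end
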